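/- Let Ω be a non-empty closed discrete subset of ℂ. The space R̂_Ω of Ω-continuable holomorphic germs at 0 is stable under convolution if and only if Ω is stable under addition (i.e., ω₁, ω₂ ∈ Ω implies ω₁ + ω₂ ∈ Ω). -/

import Mathlib

open Set Metric Filter Topology intervalIntegral

noncomputable section

/-- A path `γ : [a,b] → ℂ` which is piecewise `C¹`. -/
def PiecewiseC1On (γ : ℝ → ℂ) (a b : ℝ) : Prop :=
  ContinuousOn γ (Set.Icc a b) ∧
  ∃ (n : ℕ) (u : ℕ → ℝ), u 0 = a ∧ u n = b ∧ (∀ i < n, u i ≤ u (i + 1)) ∧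
    ∀ i < n, ContDiffOn ℝ 1 γ (Set.Icc (u i) (u (i + 1)))

/-- The germ at `γ a` of the function `f` admits analytic continuation along
`γ` restricted to `[a,b]`, resulting in the germ of `g` at `γ b`.  This is the
usual definition via a family of analytic elements `(F t, r t)` along the path
which are locally compatible. -/
def ContAlong (f : ℂ → ℂ) (γ : ℝ → ℂ) (a b : ℝ) (g : ℂ → ℂ) : Prop :=
  ∃ (F : ℝ → ℂ → ℂ) (r : ℝ → ℝ),
    (∀ t ∈ Set.Icc a b, 0 < r t ∧ AnalyticOnNhd ℂ (F t) (Metric.ball (γ t) (r t))) ∧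
    (∀ t ∈ Set.Icc a b, ∃ ε > 0, ∀ t' ∈ Set.Icc a b, |t' - t| < ε →
      Set.EqOn (F t) (F t') (Metric.ball (γ t) (r t) ∩ Metric.ball (γ t') (r t'))) ∧
    (∀ᶠ z in 𝓝 (γ a), F a z = f z) ∧
    (∀ᶠ z in 𝓝 (γ b), F b z = g z)

/-- The germ of `f` at `γ a` admits analytic continuation along `γ|[a,b]`. -/
def ContinuableAlong (f : ℂ → ℂ) (γ : ℝ → ℂ) (a b : ℝ) : Prop :=
  ∃ g, ContAlong f γ a b g

/-- `f` is an `Ω`-continuable holomorphic germ at `0`: it is holomorphic on some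
disc `D_R` with `D_R∖{0}` disjoint from `Ω`, and admits analytic continuation
along every (piecewise `C¹`) path of `ℂ∖Ω` originating from any point of `D_R∖{0}`. -/
def OmegaCont (Ω : Set ℂ) (f : ℂ → ℂ) : Prop :=
  ∃ R > 0, AnalyticOnNhd ℂ f (Metric.ball 0 R) ∧
    (∀ ζ ∈ Metric.ball (0:ℂ) R, ζ ≠ 0 → ζ ∉ Ω) ∧
    ∀ γ : ℝ → ℂ, PiecewiseC1On γ 0 1 → γ 0 ∈ Metric.ball (0:ℂ) R → γ 0 ≠ 0 →
      (∀ t ∈ Set.Icc (0:ℝ) 1, γ t ∉ Ω) → ContinuableAlong f γ 0 1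

/-- Convolution of two germs: `(f ⋆ g)(ζ) = ∫₀^ζ f(ξ) g(ζ-ξ) dξ`, the integral
being taken over the line segment from `0` to `ζ`. -/
def conv (f g : ℂ → ℂ) (ζ : ℂ) : ℂ :=
  ζ * ∫ t in (0:ℝ)..1, f ((t : ℂ) * ζ) * g ((1 - (t : ℂ)) * ζ)

/-! Let `Ω` be stable under addition. To continue `f ⋆ g` along `γ`, one deforms the segment
`[0, γ 0]` through contours `H t` from `0` to `γ t` which avoid `Ω` except possibly at their origin
and are symmetric, `H t (1 - s) = γ t - H t s`, so that both factors of `f(ξ) g(γ t - ξ)` are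
continued along `H t`. When the end of a contour moves by `v`, its point `H s` moves by `v * l s`,
where `l s + l (1 - s) = 1`. The weight `l` may be chosen to vanish wherever `H s` is close to `Ω`:
the distance to `Ω` is subadditive because `Ω` is stable under addition, and `H s + H (1 - s)` is
far from `Ω`, so `H s` and `H (1 - s)` are never both close to `Ω`.

Conversely, let `w = ω₁ + ω₂` with `ω₁, ω₂ ≠ 0`. The convolution `h` of `1 / (ζ - ω₁)` and
`1 / (ζ - ω₂)` satisfies `((ζ - w) h)' = 1 / (ζ - ω₁) + 1 / (ζ - ω₂)` near `0`, so continuation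
along a small loop around `ω₁` adds a non-zero constant, `2πi` or `4πi`, to `(ζ - w) h`. If `w` were
not in `Ω`, both branches of `h` would continue analytically to `w` along one and the same path, and
`(ζ - w) h` would vanish there for both, although they differ by that constant. -/

section Germs

variable {E : Type*} [NormedAddCommGroup E] [NormedSpace ℂ E]

lemma eqOn_ball_inter_ball {f g : ℂ → E} {a b z : ℂ} {r s : ℝ}
    (hf : AnalyticOnNhd ℂ f (ball a r)) (hg : AnalyticOnNhd ℂ g (ball b s))
    (hz : z ∈ ball a r ∩ ball b s) (h : f =ᶠ[𝓝 z] g) : EqOn f g (ball a r ∩ ball b s) :=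
  (hf.mono inter_subset_left).eqOn_of_preconnected_of_eventuallyEq (hg.mono inter_subset_right)
    ((convex_ball a r).inter (convex_ball b s)).isPreconnected hz h

lemma eventually_eventuallyEq_iff [CompleteSpace E] {f g : ℂ → E} {z₀ : ℂ} (hf : AnalyticAt ℂ f z₀)
    (hg : AnalyticAt ℂ g z₀) : ∀ᶠ z in 𝓝 z₀, (f =ᶠ[𝓝 z] g ↔ f =ᶠ[𝓝 z₀] g) := by
  obtain ⟨r, hr, hfr⟩ := hf.exists_ball_analyticOnNhd
  obtain ⟨s, hs, hgs⟩ := hg.exists_ball_analyticOnNhd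
  have hopen : IsOpen (ball z₀ r ∩ ball z₀ s) := isOpen_ball.inter isOpen_ball
  have hz₀ : z₀ ∈ ball z₀ r ∩ ball z₀ s := ⟨mem_ball_self hr, mem_ball_self hs⟩
  filter_upwards [hopen.mem_nhds hz₀] with z hz
  constructor <;> intro h
  · exact (eqOn_ball_inter_ball hfr hgs hz h).eventuallyEq_of_mem (hopen.mem_nhds hz₀)
  · exact (eqOn_ball_inter_ball hfr hgs hz₀ h).eventuallyEq_of_mem (hopen.mem_nhds hz)

variable {X Y : Type*} [TopologicalSpace X] [TopologicalSpace Y] {γ : X → ℂ} {S T : Set X}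
  {F G : X → ℂ → E}

/-- `F` is a family of analytic germs, `F x` at `γ x`, any two of which are direct continuations
of one another when their indices in `S` are close: analytic continuation along `γ`, formulated
with germs rather than with analytic elements on discs. -/
structure IsContinuationOn (F : X → ℂ → E) (γ : X → ℂ) (S : Set X) : Prop where
  analyticAt : ∀ x ∈ S, AnalyticAt ℂ (F x) (γ x)
  eventually_eq : ∀ x ∈ S, ∀ᶠ y in 𝓝[S] x, F y =ᶠ[𝓝 (γ y)] F x

namespace IsContinuationOn

lemma const {f : ℂ → E} (hf : ∀ x ∈ S, AnalyticAt ℂ f (γ x)) :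
    IsContinuationOn (fun _ => f) γ S :=
  ⟨hf, fun _ _ => .of_forall fun _ => .rfl⟩

lemma mono (hF : IsContinuationOn F γ S) (hTS : T ⊆ S) : IsContinuationOn F γ T :=
  ⟨fun x hx => hF.analyticAt x (hTS hx),
    fun x hx => nhdsWithin_mono x hTS (hF.eventually_eq x (hTS hx))⟩

lemma congr (hF : IsContinuationOn F γ S) (hγ : ContinuousOn γ S)
    (hGF : ∀ x ∈ S, G x =ᶠ[𝓝 (γ x)] F x) : IsContinuationOn G γ S where
  analyticAt x hx := (hF.analyticAt x hx).congr (hGF x hx).symm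
  eventually_eq x hx := by
    have hnear := (hγ x hx).eventually (eventually_eventually_nhds.2 (hGF x hx))
    filter_upwards [hF.eventually_eq x hx, hnear, self_mem_nhdsWithin] with y hyx hy hyS
    exact (hGF y hyS).trans (hyx.trans (EventuallyEq.symm hy))

lemma congr_path {δ : X → ℂ} (hF : IsContinuationOn F γ S) (h : EqOn δ γ S) :
    IsContinuationOn F δ S where
  analyticAt x hx := by rw [h hx]; exact hF.analyticAt x hx
  eventually_eq x hx := by
    filter_upwards [hF.eventually_eq x hx, self_mem_nhdsWithin] with y hy hyS
    rwa [h hyS]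

lemma comp {σ : Y → X} {U : Set Y} (hF : IsContinuationOn F γ S) (hσ : ContinuousOn σ U)
    (hmaps : MapsTo σ U S) : IsContinuationOn (F ∘ σ) (γ ∘ σ) U where
  analyticAt y hy := hF.analyticAt (σ y) (hmaps hy)
  eventually_eq y hy := ((hσ y hy).tendsto_nhdsWithin hmaps).eventually
    (hF.eventually_eq (σ y) (hmaps hy))

lemma union (hF : IsContinuationOn F γ S) (hFT : IsContinuationOn F γ T) (hS : IsClosed S)
    (hT : IsClosed T) : IsContinuationOn F γ (S ∪ T) := by
  have eventually_nhdsWithin_of_closed {U : Set X} (hU : IsClosed U)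
      (hFU : IsContinuationOn F γ U) (x : X) : ∀ᶠ y in 𝓝[U] x, F y =ᶠ[𝓝 (γ y)] F x := by
    by_cases hx : x ∈ U
    · exact hFU.eventually_eq x hx
    · rw [← hU.closure_eq, mem_closure_iff_nhdsWithin_neBot, not_neBot] at hx
      simp [hx]
  refine ⟨fun x hx => hx.elim (hF.analyticAt x) (hFT.analyticAt x), fun x _ => ?_⟩
  rw [nhdsWithin_union]
  exact eventually_sup.2
    ⟨eventually_nhdsWithin_of_closed hS hF x, eventually_nhdsWithin_of_closed hT hFT x⟩

protected lemma deriv [CompleteSpace E] (hF : IsContinuationOn F γ S) :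
    IsContinuationOn (fun x => deriv (F x)) γ S where
  analyticAt x hx := (hF.analyticAt x hx).deriv
  eventually_eq x hx := (hF.eventually_eq x hx).mono fun _ hy => hy.deriv

lemma mul_left {F : X → ℂ → ℂ} (hF : IsContinuationOn F γ S) {m : ℂ → ℂ}
    (hm : ∀ x ∈ S, AnalyticAt ℂ m (γ x)) : IsContinuationOn (fun x z => m z * F x z) γ S where
  analyticAt x hx := (hm x hx).mul (hF.analyticAt x hx)
  eventually_eq x hx := (hF.eventually_eq x hx).mono fun _ hy => EventuallyEq.rfl.mul hy

lemma eventuallyEq_of_isPreconnected [CompleteSpace E] (hF : IsContinuationOn F γ S)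
    (hG : IsContinuationOn G γ S) (hγ : ContinuousOn γ S) (hS : IsPreconnected S) {x y : X}
    (hx : x ∈ S) (hy : y ∈ S) (h : F x =ᶠ[𝓝 (γ x)] G x) : F y =ᶠ[𝓝 (γ y)] G y := by
  refine (hS.induction₂ (fun u v => F u =ᶠ[𝓝 (γ u)] G u ↔ F v =ᶠ[𝓝 (γ v)] G v)
    (fun u hu => ?_) (fun _ _ _ _ _ _ h₁ h₂ => h₁.trans h₂) (fun _ _ _ _ h => h.symm) hx hy).1 h
  have hagree := (hγ u hu).eventually
    (eventually_eventuallyEq_iff (hF.analyticAt u hu) (hG.analyticAt u hu))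
  filter_upwards [hagree, hF.eventually_eq u hu, hG.eventually_eq u hu] with v hv hFv hGv
  rw [← hv]
  exact ⟨fun h => hFv.trans (h.trans hGv.symm), fun h => hFv.symm.trans (h.trans hGv)⟩

lemma continuousOn_eval (hF : IsContinuationOn F γ S) (hγ : ContinuousOn γ S) :
    ContinuousOn (fun x => F x (γ x)) S := fun x hx =>
  ((hF.analyticAt x hx).continuousAt.comp_continuousWithinAt (hγ x hx)).congr_of_eventuallyEq
    ((hF.eventually_eq x hx).mono fun _ hy => hy.eq_of_nhds) rfl

end IsContinuationOn

lemma IsContinuationOn.concat {γ : ℝ → ℂ} {F G : ℝ → ℂ → E} {a b c : ℝ}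
    (hF : IsContinuationOn F γ (Icc a b)) (hG : IsContinuationOn G γ (Icc b c)) (hab : a ≤ b)
    (hbc : b ≤ c) (hγ : ContinuousOn γ (Icc b c)) (h : G b =ᶠ[𝓝 (γ b)] F b) :
    IsContinuationOn (fun t => if t ≤ b then F t else G t) γ (Icc a c) := by
  rw [← Icc_union_Icc_eq_Icc hab hbc]
  refine IsContinuationOn.union ?_ ?_ isClosed_Icc isClosed_Icc
  · refine ⟨fun t ht => by simpa [ht.2] using hF.analyticAt t ht, fun t ht => ?_⟩
    filter_upwards [hF.eventually_eq t ht, self_mem_nhdsWithin] with u hu hut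
    simpa [hut.2, ht.2] using hu
  · refine hG.congr hγ fun t ht => ?_
    rcases ht.1.eq_or_lt with rfl | hlt
    · simpa using h.symm
    · simp [hlt.not_ge]

lemma continuableAlong_iff {f : ℂ → ℂ} {γ : ℝ → ℂ} {a b : ℝ} (hγ : ContinuousOn γ (Icc a b)) :
    ContinuableAlong f γ a b ↔
      ∃ F, IsContinuationOn F γ (Icc a b) ∧ F a =ᶠ[𝓝 (γ a)] f := by
  constructor
  · rintro ⟨-, F, r, hF, hcompat, h0, -⟩
    refine ⟨F, ⟨fun t ht => (hF t ht).2 _ (mem_ball_self (hF t ht).1), fun t ht => ?_⟩, h0⟩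
    obtain ⟨ε, hε, hEq⟩ := hcompat t ht
    have hmem := (hγ t ht).eventually (isOpen_ball.mem_nhds (mem_ball_self (hF t ht).1))
    filter_upwards [hmem, self_mem_nhdsWithin, mem_nhdsWithin_of_mem_nhds (ball_mem_nhds t hε)]
      with u hu huI hut
    exact (hEq u huI (by rwa [mem_ball, Real.dist_eq] at hut)).symm.eventuallyEq_of_mem
      ((isOpen_ball.inter isOpen_ball).mem_nhds ⟨hu, mem_ball_self (hF u huI).1⟩)
  · rintro ⟨F, hF, h0⟩
    choose! r hr using fun t ht => (hF.analyticAt t ht).exists_ball_analyticOnNhd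
    refine ⟨F b, F, r, hr, fun t ht => ?_, h0, .of_forall fun _ => rfl⟩
    have hmem := (hγ t ht).eventually (isOpen_ball.mem_nhds (mem_ball_self (hr t ht).1))
    obtain ⟨ε, hε, hnear⟩ := Metric.mem_nhdsWithin_iff.1 (hmem.and (hF.eventually_eq t ht))
    refine ⟨ε, hε, fun u hu hut => ?_⟩
    obtain ⟨hu_mem, hu_eq⟩ := hnear ⟨by simpa [Real.dist_eq] using hut, hu⟩
    exact eqOn_ball_inter_ball (hr t ht).2 (hr u hu).2 ⟨hu_mem, mem_ball_self (hr u hu).1⟩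
      hu_eq.symm

/-- An analytic continuation along `γ` by functions analytic on discs of a common radius `ρ`, so
that it is also one along every path which stays `ρ`-close to `γ`. -/
structure IsUniformContinuationOn (F : X → ℂ → E) (γ : X → ℂ) (ρ : ℝ) (S : Set X) : Prop where
  pos : 0 < ρ
  analyticOnNhd : ∀ x ∈ S, AnalyticOnNhd ℂ (F x) (ball (γ x) ρ)
  eventually_eqOn : ∀ x ∈ S, ∀ᶠ y in 𝓝[S] x, EqOn (F y) (F x) (ball (γ y) ρ ∩ ball (γ x) ρ)

lemma IsContinuationOn.exists_analyticOnNhd_ball [CompleteSpace E]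
    (hF : IsContinuationOn F γ S) (hγ : ContinuousOn γ S) (hS : IsCompact S) :
    ∃ ρ > 0, ∀ x ∈ S, ∃ f, AnalyticOnNhd ℂ f (ball (γ x) ρ) ∧ f =ᶠ[𝓝 (γ x)] F x := by
  refine hS.induction_on (p := fun T =>
    ∃ ρ > 0, ∀ x ∈ T, ∃ f, AnalyticOnNhd ℂ f (ball (γ x) ρ) ∧ f =ᶠ[𝓝 (γ x)] F x)
    ⟨1, one_pos, by simp⟩ ?_ ?_ fun x hx => ?_
  · rintro T U hTU ⟨ρ, hρ, hU⟩
    exact ⟨ρ, hρ, fun x hx => hU x (hTU hx)⟩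
  · rintro T U ⟨ρ, hρ, hT⟩ ⟨ρ', hρ', hU⟩
    refine ⟨min ρ ρ', lt_min hρ hρ', ?_⟩
    rintro x (hx | hx)
    · obtain ⟨f, hf, hfF⟩ := hT x hx
      exact ⟨f, hf.mono (ball_subset_ball (min_le_left _ _)), hfF⟩
    · obtain ⟨f, hf, hfF⟩ := hU x hx
      exact ⟨f, hf.mono (ball_subset_ball (min_le_right _ _)), hfF⟩
  · obtain ⟨r, hr, hFr⟩ := (hF.analyticAt x hx).exists_ball_analyticOnNhd
    have hmem := (hγ x hx).eventually (ball_mem_nhds _ (half_pos hr))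
    refine ⟨_, hmem.and (hF.eventually_eq x hx), r / 2, half_pos hr, fun y hy => ?_⟩
    refine ⟨F x, hFr.mono (ball_subset_ball' ?_), hy.2.symm⟩
    linarith [mem_ball.1 hy.1]

lemma IsContinuationOn.exists_isUniformContinuationOn [CompleteSpace E]
    (hF : IsContinuationOn F γ S) (hγ : ContinuousOn γ S) (hS : IsCompact S) :
    ∃ ρ G, IsUniformContinuationOn G γ ρ S ∧ ∀ x ∈ S, G x =ᶠ[𝓝 (γ x)] F x := by
  obtain ⟨ρ, hρ, h⟩ := hF.exists_analyticOnNhd_ball hγ hS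
  choose! G hG hGF using h
  refine ⟨ρ, G, ⟨hρ, hG, fun x hx => ?_⟩, hGF⟩
  filter_upwards [(hγ x hx).eventually (ball_mem_nhds _ hρ),
    (hF.congr hγ hGF).eventually_eq x hx, self_mem_nhdsWithin] with y hmem hy hyS
  exact eqOn_ball_inter_ball (hG y hyS) (hG x hx) ⟨mem_ball_self hρ, hmem⟩ hy

namespace IsUniformContinuationOn

variable {ρ : ℝ}

lemma mono (hF : IsUniformContinuationOn F γ ρ S) {ρ' : ℝ} (h₀ : 0 < ρ') (h : ρ' ≤ ρ) :
    IsUniformContinuationOn F γ ρ' S where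
  pos := h₀
  analyticOnNhd x hx := (hF.analyticOnNhd x hx).mono (ball_subset_ball h)
  eventually_eqOn x hx := (hF.eventually_eqOn x hx).mono fun _ hy =>
    hy.mono (inter_subset_inter (ball_subset_ball h) (ball_subset_ball h))

lemma isContinuationOn_of_mem_ball (hF : IsUniformContinuationOn F γ ρ S) {δ : X → ℂ}
    (hδ : ContinuousOn δ S) (hδγ : ∀ x ∈ S, δ x ∈ ball (γ x) ρ) : IsContinuationOn F δ S where
  analyticAt x hx := hF.analyticOnNhd x hx _ (hδγ x hx)
  eventually_eq x hx := by
    filter_upwards [(hδ x hx).eventually (isOpen_ball.mem_nhds (hδγ x hx)),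
      hF.eventually_eqOn x hx, self_mem_nhdsWithin] with y hmem hy hyS
    exact hy.eventuallyEq_of_mem ((isOpen_ball.inter isOpen_ball).mem_nhds ⟨hδγ y hyS, hmem⟩)

lemma comp (hF : IsUniformContinuationOn F γ ρ S) {σ : Y → X} {U : Set Y}
    (hσ : ContinuousOn σ U) (hmaps : MapsTo σ U S) :
    IsUniformContinuationOn (F ∘ σ) (γ ∘ σ) ρ U where
  pos := hF.pos
  analyticOnNhd y hy := hF.analyticOnNhd (σ y) (hmaps hy)
  eventually_eqOn y hy := ((hσ y hy).tendsto_nhdsWithin hmaps).eventually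
    (hF.eventually_eqOn (σ y) (hmaps hy))

end IsUniformContinuationOn

end Germs

section ParametricIntegral

open MeasureTheory

variable {α E : Type*} [MeasurableSpace α] {μ : Measure α} [NormedAddCommGroup E]

lemma aestronglyMeasurable_of_hasDerivAt {𝕜 : Type*} [NontriviallyNormedField 𝕜]
    [NormedSpace 𝕜 E] {F : 𝕜 → α → E} {F' : α → E} {z₀ : 𝕜}
    (hF : ∀ᶠ z in 𝓝 z₀, AEStronglyMeasurable (F z) μ)
    (hF' : ∀ᵐ a ∂μ, HasDerivAt (fun z => F z a) (F' a) z₀) : AEStronglyMeasurable F' μ := by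
  obtain ⟨u, hu, hFu⟩ := exists_seq_forall_of_frequently
    (hF.filter_mono (nhdsWithin_le_nhds (s := {z₀}ᶜ))).frequently
  refine aestronglyMeasurable_of_tendsto_ae atTop (f := fun n a => slope (fun z => F z a) z₀ (u n))
    (fun n => ((hFu n).sub hF.self_of_nhds).const_smul _) ?_
  filter_upwards [hF'] with a ha
  exact (hasDerivAt_iff_tendsto_slope.1 ha).comp hu

variable [NormedSpace ℂ E]

lemma differentiableAt_integral_of_norm_le [IsFiniteMeasure μ] {F : ℂ → α → E} {z₀ : ℂ} {r C : ℝ}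
    (hr : 0 < r) (hmeas : ∀ z ∈ ball z₀ r, AEStronglyMeasurable (F z) μ)
    (hdiff : ∀ᵐ a ∂μ, DifferentiableOn ℂ (fun z => F z a) (ball z₀ r))
    (hC : ∀ᵐ a ∂μ, ∀ z ∈ ball z₀ r, ‖F z a‖ ≤ C) :
    DifferentiableAt ℂ (fun z => ∫ a, F z a ∂μ) z₀ := by
  have hderiv : ∀ᵐ a ∂μ, ∀ z ∈ ball z₀ r,
      HasDerivAt (fun z => F z a) (deriv (fun z => F z a) z) z := by
    filter_upwards [hdiff] with a ha z hz
    exact (ha.differentiableAt (isOpen_ball.mem_nhds hz)).hasDerivAt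
  have hz₀ : z₀ ∈ ball z₀ r := mem_ball_self hr
  have hmeas' : ∀ᶠ z in 𝓝 z₀, AEStronglyMeasurable (F z) μ :=
    eventually_of_mem (ball_mem_nhds z₀ hr) hmeas
  refine (hasDerivAt_integral_of_dominated_loc_of_deriv_le (bound := fun _ => C / (r / 4))
    (F' := fun z a => deriv (fun z => F z a) z)
    (ball_mem_nhds z₀ (half_pos hr)) hmeas' ?_
    (aestronglyMeasurable_of_hasDerivAt hmeas' (hderiv.mono fun a ha => ha z₀ hz₀))
    ?_ (integrable_const _) ?_).2.differentiableAt
  · exact .of_bound (hmeas z₀ hz₀) C (hC.mono fun a ha => ha z₀ hz₀)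
  · filter_upwards [hdiff, hC] with a ha haC z hz
    have hsub : closedBall z (r / 4) ⊆ ball z₀ r :=
      closedBall_subset_ball' (by linarith [mem_ball.1 hz])
    refine Complex.norm_deriv_le_of_forall_mem_sphere_norm_le (by positivity) ?_
      fun w hw => haC w (hsub (sphere_subset_closedBall hw))
    exact (ha.mono (closure_ball_subset_closedBall.trans hsub)).diffContOnCl
  · filter_upwards [hderiv] with a ha z hz
    exact ha z (ball_subset_ball (by linarith) hz)

lemma differentiableOn_intervalIntegral {F : ℂ → ℝ → E} {U : Set ℂ} {a b : ℝ} (hU : IsOpen U)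
    (hcont : ContinuousOn (fun p : ℂ × ℝ => F p.1 p.2) (U ×ˢ uIcc a b))
    (hdiff : ∀ t ∈ uIcc a b, DifferentiableOn ℂ (fun z => F z t) U) :
    DifferentiableOn ℂ (fun z => ∫ t in a..b, F z t) U := by
  intro z₀ hz₀
  obtain ⟨r, hr, hrU⟩ := nhds_basis_closedBall.mem_iff.1 (hU.mem_nhds hz₀)
  have hrU' : ball z₀ r ⊆ U := ball_subset_closedBall.trans hrU
  obtain ⟨C, hC⟩ := ((isCompact_closedBall z₀ r).prod isCompact_uIcc).exists_bound_of_continuousOn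
    (hcont.mono (prod_mono hrU subset_rfl))
  have hsub : uIoc a b ⊆ uIcc a b := Ioc_subset_Icc_self
  have hforall {p : ℝ → Prop} (h : ∀ t ∈ uIcc a b, p t) :
      ∀ᵐ t ∂volume.restrict (uIoc a b), p t :=
    ae_restrict_of_forall_mem measurableSet_uIoc fun t ht => h t (hsub ht)
  have hmeas : ∀ z ∈ ball z₀ r, AEStronglyMeasurable (F z) (volume.restrict (uIoc a b)) :=
    fun z hz => (hcont.comp (by fun_prop : Continuous fun t : ℝ => (z, t)).continuousOn
      fun t ht => ⟨hrU' hz, hsub ht⟩).aestronglyMeasurable measurableSet_uIoc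
  have : IsFiniteMeasure (volume.restrict (uIoc a b)) :=
    inferInstanceAs (IsFiniteMeasure (volume.restrict (Ioc _ _)))
  simp only [intervalIntegral_eq_integral_uIoc]
  exact ((differentiableAt_integral_of_norm_le hr hmeas
    (hforall fun t ht => (hdiff t ht).mono hrU')
    (hforall fun t ht z hz => hC (z, t) ⟨ball_subset_closedBall hz, ht⟩)).const_smul
      _).differentiableWithinAt

end ParametricIntegral

section PathIntegral

variable {E : Type*} [NormedAddCommGroup E] [NormedSpace ℂ E]
  {F : ℝ → ℂ → E} {γ K₀ K₁ : ℝ → ℂ} {ρ a b : ℝ} {S : Set ℝ}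

namespace IsUniformContinuationOn

lemma intervalIntegrable_deriv_smul (hF : IsUniformContinuationOn F γ ρ (Icc a b)) (hab : a ≤ b)
    (hK : ContDiff ℝ 1 K₀) (hKγ : ∀ s ∈ Icc a b, K₀ s ∈ ball (γ s) ρ) :
    IntervalIntegrable (fun s => deriv K₀ s • F s (K₀ s)) MeasureTheory.volume a b :=
  ContinuousOn.intervalIntegrable_of_Icc hab <|
    (hK.continuous_deriv le_rfl).continuousOn.smul <|
      (hF.isContinuationOn_of_mem_ball hK.continuous.continuousOn hKγ).continuousOn_eval
        hK.continuous.continuousOn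

variable [CompleteSpace E]

lemma exists_primitive (hF : IsUniformContinuationOn F γ ρ S) :
    ∃ P : ℝ → ℂ → E, (∀ s ∈ S, ∀ z ∈ ball (γ s) ρ, HasDerivAt (P s) (F s z) z) ∧
      ∀ s ∈ S, ∀ᶠ t in 𝓝[S] s, ∀ z ∈ ball (γ t) ρ ∩ ball (γ s) ρ,
        ∀ w ∈ ball (γ t) ρ ∩ ball (γ s) ρ, P t z - P t w = P s z - P s w := by
  choose! P hP using fun s hs => (hF.analyticOnNhd s hs).differentiableOn.isExactOn_ball
  refine ⟨P, hP, fun s hs => ?_⟩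
  filter_upwards [hF.eventually_eqOn s hs, self_mem_nhdsWithin] with t hst ht z hz w hw
  have hopen : IsOpen (ball (γ t) ρ ∩ ball (γ s) ρ) := isOpen_ball.inter isOpen_ball
  have hderiv (x) (hx : x ∈ ball (γ t) ρ ∩ ball (γ s) ρ) :
      HasDerivAt (fun x => P t x - P s x) 0 x := by
    have := (hP t ht x hx.1).fun_sub (hP s hs x hx.2)
    rwa [hst hx, sub_self] at this
  have hconst : P t z - P s z = P t w - P s w :=
    hopen.is_const_of_deriv_eq_zero ((convex_ball _ _).inter (convex_ball _ _)).isPreconnected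
      (fun x hx => (hderiv x hx).differentiableAt.differentiableWithinAt)
      (fun x hx => (hderiv x hx).deriv) hz hw
  rw [sub_eq_sub_iff_add_eq_add] at hconst ⊢
  rw [hconst]
  abel

lemma exists_hasDerivWithinAt (hF : IsUniformContinuationOn F γ ρ (Icc a b))
    (hK₀ : ContDiff ℝ 1 K₀) (hK₁ : ContDiff ℝ 1 K₁)
    (hK₀γ : ∀ s ∈ Icc a b, K₀ s ∈ ball (γ s) ρ) (hK₁γ : ∀ s ∈ Icc a b, K₁ s ∈ ball (γ s) ρ) :
    ∃ D : ℝ → E, (∀ s, K₁ s = K₀ s → D s = 0) ∧ ∀ s ∈ Icc a b,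
      HasDerivWithinAt D (deriv K₁ s • F s (K₁ s) - deriv K₀ s • F s (K₀ s)) (Icc a b) s := by
  obtain ⟨P, hP, hloc⟩ := hF.exists_primitive
  refine ⟨fun s => P s (K₁ s) - P s (K₀ s), fun s hs => by simp [hs], fun s hs => ?_⟩
  have hasDerivAt_comp {K : ℝ → ℂ} (hK : ContDiff ℝ 1 K) (hKs : K s ∈ ball (γ s) ρ) :
      HasDerivAt (fun t => P s (K t)) (deriv K s • F s (K s)) s :=
    (hP s hs _ hKs).scomp s (hK.differentiable one_ne_zero s).hasDerivAt
  refine ((hasDerivAt_comp hK₁ (hK₁γ s hs)).sub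
    (hasDerivAt_comp hK₀ (hK₀γ s hs))).hasDerivWithinAt.congr_of_eventuallyEq ?_ rfl
  have hnear {K : ℝ → ℂ} (hK : ContDiff ℝ 1 K) (hKs : K s ∈ ball (γ s) ρ) :
      ∀ᶠ t in 𝓝[Icc a b] s, K t ∈ ball (γ s) ρ :=
    hK.continuous.continuousWithinAt.eventually (isOpen_ball.mem_nhds hKs)
  filter_upwards [hloc s hs, hnear hK₀ (hK₀γ s hs), hnear hK₁ (hK₁γ s hs), self_mem_nhdsWithin]
    with t ht ht₀ ht₁ htI
  exact ht _ ⟨hK₁γ t htI, ht₁⟩ _ ⟨hK₀γ t htI, ht₀⟩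

lemma integral_deriv_smul_eq (hF : IsUniformContinuationOn F γ ρ (Icc a b)) (hab : a ≤ b)
    (hK₀ : ContDiff ℝ 1 K₀) (hK₁ : ContDiff ℝ 1 K₁)
    (hK₀γ : ∀ s ∈ Icc a b, K₀ s ∈ ball (γ s) ρ) (hK₁γ : ∀ s ∈ Icc a b, K₁ s ∈ ball (γ s) ρ)
    (ha : K₁ a = K₀ a) (hb : K₁ b = K₀ b) :
    ∫ s in a..b, deriv K₁ s • F s (K₁ s) = ∫ s in a..b, deriv K₀ s • F s (K₀ s) := by
  obtain ⟨D, hD, hD'⟩ := hF.exists_hasDerivWithinAt hK₀ hK₁ hK₀γ hK₁γ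
  have hint₀ := hF.intervalIntegrable_deriv_smul hab hK₀ hK₀γ
  have hint₁ := hF.intervalIntegrable_deriv_smul hab hK₁ hK₁γ
  rw [← sub_eq_zero, ← integral_sub hint₁ hint₀,
    integral_eq_sub_of_hasDerivAt_of_le hab (fun s hs => (hD' s hs).continuousWithinAt)
      (fun s hs => (hD' s (Ioo_subset_Icc_self hs)).hasDerivAt (Icc_mem_nhds hs.1 hs.2))
      (hint₁.sub hint₀), hD a ha, hD b hb, sub_self]

end IsUniformContinuationOn

end PathIntegral

section SymmetricContours

lemma one_sub_mem_Icc {s : ℝ} (hs : s ∈ Icc (0 : ℝ) 1) : 1 - s ∈ Icc (0 : ℝ) 1 :=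
  ⟨sub_nonneg.2 hs.2, sub_le_self 1 hs.1⟩

/-- A symmetric contour from `0` to `H 1`: `H 1 - H s` runs through the contour backwards, so that
in the convolution integral both factors are evaluated on `H`. -/
structure SymmContour (H : ℝ → ℂ) : Prop where
  contDiff : ContDiff ℝ 1 H
  symm : ∀ s, H s + H (1 - s) = H 1

namespace SymmContour

variable {H K : ℝ → ℂ}

lemma map_zero (hH : SymmContour H) : H 0 = 0 := by simpa using hH.symm 0

lemma map_one_sub (hH : SymmContour H) (s : ℝ) : H (1 - s) = H 1 - H s :=
  eq_sub_of_add_eq' (hH.symm s)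

lemma ofReal : SymmContour (fun s => (s : ℂ)) := ⟨Complex.ofRealCLM.contDiff, fun s => by simp⟩

lemma const_mul (hH : SymmContour H) (c : ℂ) : SymmContour (fun s => c * H s) :=
  ⟨contDiff_const.mul hH.contDiff, fun s => by rw [← hH.symm s, mul_add]⟩

lemma ofReal_mul_const (z : ℂ) : SymmContour (fun s => s * z) := by
  simpa only [mul_comm z] using ofReal.const_mul z

lemma add (hH : SymmContour H) (hK : SymmContour K) : SymmContour (fun s => H s + K s) :=
  ⟨hH.contDiff.add hK.contDiff, fun s => by rw [← hH.symm s, ← hK.symm s]; ring⟩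

end SymmContour

/-- The contour `H` deformed linearly so that it ends at `ζ`; integrating along it turns an integral
over `H` into a function of `ζ` near `H 1`. -/
def moveEnd (H : ℝ → ℂ) (ζ : ℂ) (s : ℝ) : ℂ := H s + (ζ - H 1) * s

variable {H : ℝ → ℂ} {F G : ℝ → ℂ → ℂ} {ρ : ℝ} {ζ : ℂ}

@[simp] lemma moveEnd_one : moveEnd H ζ 1 = ζ := by simp [moveEnd]

lemma dist_moveEnd_le {s : ℝ} (hs : s ∈ Icc (0 : ℝ) 1) :
    dist (moveEnd H ζ s) (H s) ≤ dist ζ (H 1) := by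
  rw [moveEnd, dist_eq_norm, add_sub_cancel_left, norm_mul, Complex.norm_real,
    Real.norm_of_nonneg hs.1, dist_eq_norm]
  exact mul_le_of_le_one_right (norm_nonneg _) hs.2

lemma SymmContour.moveEnd (hH : SymmContour H) : SymmContour (moveEnd H ζ) :=
  hH.add (SymmContour.ofReal.const_mul (ζ - H 1))

lemma SymmContour.deriv_moveEnd (hH : SymmContour H) (s : ℝ) :
    deriv (_root_.moveEnd H ζ) s = deriv H s + (ζ - H 1) := by
  have hlin : HasDerivAt (fun s : ℝ => (ζ - H 1) * (s : ℂ)) (ζ - H 1) s := by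
    simpa using (hasDerivAt_id s).ofReal_comp.const_mul (ζ - H 1)
  exact ((hH.contDiff.differentiable one_ne_zero s).hasDerivAt.add hlin).deriv

/-- The convolution integral of two families of germs along the symmetric contour `K`; the second
factor is evaluated at `K 1 - K s = K (1 - s)`. -/
def convAlong (F G : ℝ → ℂ → ℂ) (K : ℝ → ℂ) : ℂ :=
  ∫ s in (0 : ℝ)..1, deriv K s * (F s (K s) * G (1 - s) (K (1 - s)))

lemma conv_eq_convAlong (f g : ℂ → ℂ) (z : ℂ) :
    conv f g = fun ζ => convAlong (fun _ => f) (fun _ => g) (moveEnd (fun s => s * z) ζ) := by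
  funext ζ
  have hmove : moveEnd (fun s => s * z) ζ = fun s : ℝ => (s : ℂ) * ζ := by
    funext s
    simp only [moveEnd]
    push_cast
    ring
  have hderiv (s : ℝ) : deriv (fun s : ℝ => (s : ℂ) * ζ) s = ζ := by
    simpa using ((hasDerivAt_id s).ofReal_comp.mul_const ζ).deriv
  simp only [convAlong, hmove, hderiv, conv, integral_const_mul, Complex.ofReal_sub,
    Complex.ofReal_one]

lemma convAlong_congr {F' G' : ℝ → ℂ → ℂ} {K : ℝ → ℂ}
    (hF : ∀ s ∈ Icc (0 : ℝ) 1, F' s (K s) = F s (K s))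
    (hG : ∀ s ∈ Icc (0 : ℝ) 1, G' s (K s) = G s (K s)) :
    convAlong F' G' K = convAlong F G K := by
  refine integral_congr fun s hs => ?_
  rw [uIcc_of_le zero_le_one] at hs
  simp only [hF s hs, hG _ (one_sub_mem_Icc hs)]

lemma moveEnd_mem_ball (hζ : ζ ∈ ball (H 1) ρ) {s : ℝ} (hs : s ∈ Icc (0 : ℝ) 1) :
    moveEnd H ζ s ∈ ball (H s) ρ := (dist_moveEnd_le hs).trans_lt hζ

namespace IsUniformContinuationOn

lemma continuousOn_eval_moveEnd (hF : IsUniformContinuationOn F H ρ (Icc 0 1))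
    (hH : Continuous H) {σ : ℝ → ℝ} (hσ : Continuous σ) (hmaps : MapsTo σ (Icc 0 1) (Icc 0 1)) :
    ContinuousOn (fun p : ℂ × ℝ => F (σ p.2) (moveEnd H p.1 (σ p.2)))
      (ball (H 1) ρ ×ˢ Icc 0 1) := by
  have hcont : Continuous fun p : ℂ × ℝ => moveEnd H p.1 (σ p.2) := by
    unfold moveEnd
    fun_prop
  exact ((hF.comp (hσ.comp continuous_snd).continuousOn
    fun p hp => hmaps hp.2).isContinuationOn_of_mem_ball hcont.continuousOn
    fun p hp => moveEnd_mem_ball hp.1 (hmaps hp.2)).continuousOn_eval hcont.continuousOn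

lemma differentiableOn_eval_moveEnd (hF : IsUniformContinuationOn F H ρ (Icc 0 1)) {s : ℝ}
    (hs : s ∈ Icc (0 : ℝ) 1) :
    DifferentiableOn ℂ (fun ζ => F s (moveEnd H ζ s)) (ball (H 1) ρ) := by
  refine (hF.analyticOnNhd s hs).differentiableOn.comp ?_ fun ζ hζ => moveEnd_mem_ball hζ hs
  unfold moveEnd
  fun_prop

lemma analyticOnNhd_convAlong (hF : IsUniformContinuationOn F H ρ (Icc 0 1))
    (hG : IsUniformContinuationOn G H ρ (Icc 0 1)) (hH : SymmContour H) :
    AnalyticOnNhd ℂ (fun ζ => convAlong F G (moveEnd H ζ)) (ball (H 1) ρ) := by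
  have hHcont : Continuous H := hH.contDiff.continuous
  have hderivcont : Continuous (deriv H) := hH.contDiff.continuous_deriv le_rfl
  refine DifferentiableOn.analyticOnNhd ?_ isOpen_ball
  simp only [convAlong, hH.deriv_moveEnd]
  refine differentiableOn_intervalIntegral isOpen_ball ?_ fun s hs => ?_
  all_goals rw [uIcc_of_le zero_le_one] at *
  · exact (by fun_prop : Continuous fun p : ℂ × ℝ => deriv H p.2 + (p.1 - H 1)).continuousOn.mul
      ((hF.continuousOn_eval_moveEnd hHcont continuous_id (mapsTo_id _)).mul
        (hG.continuousOn_eval_moveEnd hHcont (continuous_const.sub continuous_id)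
          fun s => one_sub_mem_Icc))
  · exact (by fun_prop : Differentiable ℂ fun ζ => deriv H s + (ζ - H 1)).differentiableOn.mul
      ((hF.differentiableOn_eval_moveEnd hs).mul
        (hG.differentiableOn_eval_moveEnd (one_sub_mem_Icc hs)))

lemma mul_reflect (hF : IsUniformContinuationOn F H ρ (Icc 0 1))
    (hG : IsUniformContinuationOn G H ρ (Icc 0 1)) (hH : SymmContour H)
    (hζ : dist ζ (H 1) < ρ / 2) :
    IsUniformContinuationOn (fun s z => F s z * G (1 - s) (ζ - z)) H (ρ / 2) (Icc 0 1) := by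
  have hle {c : ℂ} : ball c (ρ / 2) ⊆ ball c ρ := ball_subset_ball (by linarith [hF.pos])
  have hmem {s : ℝ} {z : ℂ} (hz : z ∈ ball (H s) (ρ / 2)) : ζ - z ∈ ball (H (1 - s)) ρ := by
    rw [hH.map_one_sub]
    calc dist (ζ - z) (H 1 - H s) ≤ dist ζ (H 1) + dist z (H s) := dist_sub_sub_le ..
      _ < ρ := by linarith [mem_ball.1 hz]
  have hreflect {s : ℝ} : Tendsto (fun t => 1 - t) (𝓝[Icc 0 1] s) (𝓝[Icc 0 1] (1 - s)) :=
    (continuous_const.sub continuous_id).continuousWithinAt.tendsto_nhdsWithin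
      fun _ => one_sub_mem_Icc
  refine ⟨half_pos hF.pos, fun s hs z hz => ?_, fun s hs => ?_⟩
  · exact (hF.analyticOnNhd s hs z (hle hz)).mul <|
      (hG.analyticOnNhd _ (one_sub_mem_Icc hs) _ (hmem hz)).comp
        (analyticAt_const.sub analyticAt_id)
  · filter_upwards [hF.eventually_eqOn s hs,
      hreflect.eventually (hG.eventually_eqOn _ (one_sub_mem_Icc hs))] with t hFt hGt z hz
    simp only [hFt ⟨hle hz.1, hle hz.2⟩, hGt ⟨hmem hz.1, hmem hz.2⟩]

lemma convAlong_eq_of_mem_ball (hF : IsUniformContinuationOn F H ρ (Icc 0 1))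
    (hG : IsUniformContinuationOn G H ρ (Icc 0 1)) (hH : SymmContour H) {K₀ K₁ : ℝ → ℂ}
    (hK₀ : SymmContour K₀) (hK₁ : SymmContour K₁)
    (hK₀H : ∀ s ∈ Icc (0 : ℝ) 1, K₀ s ∈ ball (H s) (ρ / 2))
    (hK₁H : ∀ s ∈ Icc (0 : ℝ) 1, K₁ s ∈ ball (H s) (ρ / 2)) (h : K₁ 1 = K₀ 1) :
    convAlong F G K₁ = convAlong F G K₀ := by
  have hreflect {K : ℝ → ℂ} (hK : SymmContour K) : convAlong F G K =
      ∫ s in (0 : ℝ)..1, deriv K s • (F s (K s) * G (1 - s) (K 1 - K s)) := by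
    simp only [convAlong, hK.map_one_sub, smul_eq_mul]
  rw [hreflect hK₀, hreflect hK₁, h]
  exact (hF.mul_reflect hG hH (hK₀H 1 (right_mem_Icc.2 zero_le_one))).integral_deriv_smul_eq
    zero_le_one hK₀.contDiff hK₁.contDiff hK₀H hK₁H (by rw [hK₀.map_zero, hK₁.map_zero]) h

lemma eval_eq_of_mem_ball {H' : ℝ → ℂ} {F' : ℝ → ℂ → ℂ} {ρ' : ℝ}
    (hF : IsUniformContinuationOn F H ρ (Icc 0 1))
    (hF' : IsUniformContinuationOn F' H' ρ' (Icc 0 1)) {K : ℝ → ℂ} (hK : SymmContour K)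
    (hKH : ∀ s ∈ Icc (0 : ℝ) 1, K s ∈ ball (H s) ρ)
    (hKH' : ∀ s ∈ Icc (0 : ℝ) 1, K s ∈ ball (H' s) ρ') (h : F' 0 =ᶠ[𝓝 0] F 0) :
    ∀ s ∈ Icc (0 : ℝ) 1, F' s (K s) = F s (K s) := fun s hs =>
  have hKcont : ContinuousOn K (Icc 0 1) := hK.contDiff.continuous.continuousOn
  ((hF'.isContinuationOn_of_mem_ball hKcont hKH').eventuallyEq_of_isPreconnected
    (hF.isContinuationOn_of_mem_ball hKcont hKH) hKcont isPreconnected_Icc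
    (left_mem_Icc.2 zero_le_one) hs (by rwa [hK.map_zero])).eq_of_nhds

lemma convAlong_moveEnd_eventuallyEq {H' : ℝ → ℂ} {F' G' : ℝ → ℂ → ℂ} {ρ' : ℝ}
    (hF : IsUniformContinuationOn F H ρ (Icc 0 1)) (hG : IsUniformContinuationOn G H ρ (Icc 0 1))
    (hF' : IsUniformContinuationOn F' H' ρ' (Icc 0 1))
    (hG' : IsUniformContinuationOn G' H' ρ' (Icc 0 1)) (hH : SymmContour H)
    (hH' : SymmContour H') (hF₀ : F' 0 =ᶠ[𝓝 0] F 0) (hG₀ : G' 0 =ᶠ[𝓝 0] G 0)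
    (hH'H : ∀ s ∈ Icc (0 : ℝ) 1, dist (H' s) (H s) < ρ / 4) :
    (fun ζ => convAlong F' G' (moveEnd H' ζ)) =ᶠ[𝓝 (H' 1)]
      fun ζ => convAlong F G (moveEnd H ζ) := by
  have hρ := hF.pos
  filter_upwards [ball_mem_nhds (H' 1) (lt_min hF'.pos (by linarith : 0 < ρ / 4))] with ζ hζ
  have hζ' : dist ζ (H' 1) < ρ' ∧ dist ζ (H' 1) < ρ / 4 := lt_min_iff.1 hζ
  have hnear' (s) (hs : s ∈ Icc (0 : ℝ) 1) : moveEnd H' ζ s ∈ ball (H s) (ρ / 2) :=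
    calc dist (moveEnd H' ζ s) (H s) ≤ dist (moveEnd H' ζ s) (H' s) + dist (H' s) (H s) :=
          dist_triangle ..
      _ < ρ / 2 := by linarith [hH'H s hs, dist_moveEnd_le (H := H') (ζ := ζ) hs]
  have hnear (s) (hs : s ∈ Icc (0 : ℝ) 1) : moveEnd H ζ s ∈ ball (H s) (ρ / 2) :=
    moveEnd_mem_ball (by simpa using hnear' 1 (right_mem_Icc.2 zero_le_one)) hs
  have eval_eq {F F' : ℝ → ℂ → ℂ} (hF : IsUniformContinuationOn F H ρ (Icc 0 1))
      (hF' : IsUniformContinuationOn F' H' ρ' (Icc 0 1)) :=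
    hF.eval_eq_of_mem_ball hF' (hH'.moveEnd (ζ := ζ))
      (fun s hs => ball_subset_ball (by linarith) (hnear' s hs))
      fun s hs => moveEnd_mem_ball hζ'.1 hs
  rw [convAlong_congr (eval_eq hF hF' hF₀) (eval_eq hG hG' hG₀)]
  exact hF.convAlong_eq_of_mem_ball hG hH hH.moveEnd hH'.moveEnd hnear hnear' (by simp)

end IsUniformContinuationOn

end SymmetricContours

section ContourHomotopies

variable {Ω : Set ℂ} {H : ℝ → ℂ} {z : ℂ}

lemma infDist_add_le (hne : Ω.Nonempty) (hcl : IsClosed Ω)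
    (hadd : ∀ ω₁ ∈ Ω, ∀ ω₂ ∈ Ω, ω₁ + ω₂ ∈ Ω) (a b : ℂ) :
    infDist (a + b) Ω ≤ infDist a Ω + infDist b Ω := by
  obtain ⟨x, hx, hax⟩ := hcl.exists_infDist_eq_dist hne a
  obtain ⟨y, hy, hby⟩ := hcl.exists_infDist_eq_dist hne b
  rw [hax, hby]
  exact (infDist_le_dist_of_mem (hadd x hx y hy)).trans (dist_add_add_le _ _ _ _)

lemma norm_ofReal_mul_le {s : ℝ} (hs : s ∈ Icc (0 : ℝ) 1) : ‖(s : ℂ) * z‖ ≤ ‖z‖ := by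
  rw [norm_mul, Complex.norm_real, Real.norm_of_nonneg hs.1]
  exact mul_le_of_le_one_left (norm_nonneg z) hs.2

/-- A symmetric contour which starts along the segment from `0` to `z` and avoids `Ω`, except
possibly at its origin. -/
structure OmegaContour (Ω : Set ℂ) (z : ℂ) (H : ℝ → ℂ) : Prop extends SymmContour H where
  notMem : ∀ s ∈ Ioc (0 : ℝ) 1, H s ∉ Ω
  eventually_eq : ∀ᶠ s : ℝ in 𝓝 0, H s = s * z

lemma omegaContour_segment (h : ∀ s ∈ Ioc (0 : ℝ) 1, (s : ℂ) * z ∉ Ω) :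
    OmegaContour Ω z (fun s => s * z) where
  toSymmContour := .ofReal_mul_const z
  notMem := h
  eventually_eq := .of_forall fun _ => rfl

lemma exists_symmContour_weight {A : Set ℝ} (hA : IsClosed A) (h₀ : (0 : ℝ) ∈ A)
    (hdisj : Disjoint A ((fun s => 1 - s) ⁻¹' A)) :
    ∃ l : ℝ → ℂ, SymmContour l ∧ l 1 = 1 ∧ (∀ s, ‖l s‖ ≤ 1) ∧ ∀ s ∈ A, l s = 0 := by
  obtain ⟨m, hmA, hmA', hm⟩ := exists_contMDiffMap_zero_one_of_isClosed (n := 1)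
    (modelWithCornersSelf ℝ ℝ) hA (hA.preimage (by fun_prop : Continuous fun s : ℝ => 1 - s)) hdisj
  have hm_cont : ContDiff ℝ 1 m := m.contMDiff.contDiff
  have hm_zero (s) (hs : s ∈ A) : m s = 0 := hmA hs
  have hm_one (s) (hs : s ∈ A) : m (1 - s) = 1 := hmA' (by simpa using hs)
  have hl_one : (m 1 + (1 - m (1 - 1))) / 2 = 1 := by
    have hm₀ := hm_zero 0 h₀
    have hm₁ := hm_one 0 h₀
    norm_num at hm₁ ⊢
    linarith
  refine ⟨fun s => ((m s + (1 - m (1 - s))) / 2 : ℝ), ⟨?_, fun s => ?_⟩,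
    congrArg Complex.ofReal hl_one, fun s => ?_, fun s hs => by simp [hm_zero s hs, hm_one s hs]⟩
  · have hm_refl : ContDiff ℝ 1 fun s : ℝ => m (1 - s) := hm_cont.comp (by fun_prop)
    exact Complex.ofRealCLM.contDiff.comp
      ((hm_cont.add (contDiff_const.sub hm_refl)).div_const 2)
  · rw [hl_one, sub_sub_cancel]
    push_cast
    ring
  · rw [Complex.norm_real, Real.norm_of_nonneg] <;> linarith [(hm s).1, (hm s).2, (hm (1 - s)).1,
      (hm (1 - s)).2]

/-- By `infDist_add_le`, no point of a symmetric contour ending far from `Ω` is near `Ω` together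
with its mirror image, so only one of the two has to stay put. -/
lemma SymmContour.exists_weight (hH : SymmContour H) (hne : Ω.Nonempty) (hcl : IsClosed Ω)
    (hadd : ∀ ω₁ ∈ Ω, ∀ ω₂ ∈ Ω, ω₁ + ω₂ ∈ Ω) {δ : ℝ} (hδ : 0 ≤ δ)
    (hfar : 2 * δ < infDist (H 1) Ω) :
    ∃ l : ℝ → ℂ, SymmContour l ∧ l 1 = 1 ∧ (∀ s, ‖l s‖ ≤ 1) ∧ (∀ᶠ s in 𝓝 0, l s = 0) ∧
      ∀ s, infDist (H s) Ω ≤ δ → l s = 0 := by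
  have hdist : Continuous fun s => infDist (H s) Ω :=
    (continuous_infDist_pt Ω).comp hH.contDiff.continuous
  have hfar_refl : ∀ᶠ s in 𝓝 (0 : ℝ), δ < infDist (H (1 - s)) Ω :=
    (hdist.comp (by fun_prop : Continuous fun s : ℝ => 1 - s)).continuousAt.eventually
      (lt_mem_nhds (by simp only [Function.comp_apply, sub_zero]; linarith))
  obtain ⟨ε, hε, hball⟩ := nhds_basis_closedBall.eventually_iff.1
    (hfar_refl.and (Iio_mem_nhds (by norm_num : (0 : ℝ) < 1 / 2)))
  have hfar_add (s) : 2 * δ < infDist (H s) Ω + infDist (H (1 - s)) Ω :=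
    (hfar.trans_eq (by rw [hH.symm s])).trans_le (infDist_add_le hne hcl hadd _ _)
  obtain ⟨l, hl, hl₁, hl_le, hl_zero⟩ := exists_symmContour_weight
    (A := {s | infDist (H s) Ω ≤ δ} ∪ closedBall 0 ε)
    ((isClosed_le hdist continuous_const).union isClosed_closedBall)
    (Or.inr (mem_closedBall_self hε.le)) <| disjoint_left.2 <| by
      rintro s (hs | hs) (hs' | hs')
      · exact (hfar_add s).not_ge (by linarith [mem_ofPred_eq ▸ hs, mem_ofPred_eq ▸ hs'])
      · exact (hball hs').1.not_ge (by simpa using hs)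
      · exact (hball hs).1.not_ge hs'
      · linarith [(hball hs).2, (hball hs').2]
  exact ⟨l, hl, hl₁, hl_le,
    mem_of_superset (closedBall_mem_nhds 0 hε) fun s hs => hl_zero s (Or.inr hs),
    fun s hs => hl_zero s (Or.inl hs)⟩

lemma OmegaContour.exists_deformation (hH : OmegaContour Ω z H) (hne : Ω.Nonempty)
    (hcl : IsClosed Ω) (hadd : ∀ ω₁ ∈ Ω, ∀ ω₂ ∈ Ω, ω₁ + ω₂ ∈ Ω) {δ : ℝ} (hδ : 0 ≤ δ)
    (hfar : 2 * δ < infDist (H 1) Ω) :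
    ∃ l : ℝ → ℂ, Continuous l ∧ l 1 = 1 ∧
      ∀ v : ℂ, ‖v‖ ≤ δ → OmegaContour Ω z (fun s => H s + v * l s) := by
  obtain ⟨l, hl, hl₁, hl_le, hl_start, hl_zero⟩ :=
    hH.toSymmContour.exists_weight hne hcl hadd hδ hfar
  refine ⟨l, hl.contDiff.continuous, hl₁, fun v hv =>
    ⟨hH.toSymmContour.add (hl.const_mul v), fun s hs hmem => ?_, ?_⟩⟩
  · by_cases hnear : infDist (H s) Ω ≤ δ
    · rw [hl_zero s hnear, mul_zero, add_zero] at hmem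
      exact hH.notMem s hs hmem
    · refine hnear ((infDist_le_dist_of_mem hmem).trans ?_)
      rw [dist_self_add_right, norm_mul]
      exact (mul_le_of_le_one_right (norm_nonneg v) (hl_le s)).trans hv
  · filter_upwards [hH.eventually_eq, hl_start] with s hs hls
    rw [hs, hls, mul_zero, add_zero]

/-- A homotopy of `OmegaContour`s whose endpoint describes the path `γ` on `[0, T]`, starting from
the segment from `0` to `γ 0`. -/
structure IsContourHomotopy (Ω : Set ℂ) (γ : ℝ → ℂ) (T : ℝ) (H : ℝ → ℝ → ℂ) : Prop where
  continuous : Continuous (Function.uncurry H)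
  map_zero : H 0 = fun s : ℝ => (s : ℂ) * γ 0
  omegaContour : ∀ t ∈ Icc 0 T, OmegaContour Ω (γ 0) (H t)
  map_one : ∀ t ∈ Icc 0 T, H t 1 = γ t

namespace IsContourHomotopy

variable {γ : ℝ → ℂ} {T : ℝ} {H : ℝ → ℝ → ℂ}

lemma exists_extension (hH : IsContourHomotopy Ω γ T H) (hT : 0 ≤ T) (hne : Ω.Nonempty)
    (hcl : IsClosed Ω) (hadd : ∀ ω₁ ∈ Ω, ∀ ω₂ ∈ Ω, ω₁ + ω₂ ∈ Ω) (hγ : Continuous γ) {δ T' : ℝ}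
    (hδ : 0 ≤ δ) (hfar : 2 * δ < infDist (γ T) Ω) (hclose : ∀ t ∈ Icc T T', ‖γ t - γ T‖ ≤ δ) :
    ∃ H', IsContourHomotopy Ω γ T' H' := by
  have hTmem : T ∈ Icc 0 T := right_mem_Icc.2 hT
  obtain ⟨l, hl, hl₁, hdeform⟩ := (hH.omegaContour T hTmem).exists_deformation hne hcl hadd hδ
    (by rwa [hH.map_one T hTmem])
  have hbefore {t : ℝ} (ht : t ≤ T) :
      (fun s => H (min t T) s + (γ (max t T) - γ T) * l s) = H t := by
    funext s
    rw [min_eq_left ht, max_eq_right ht, sub_self, zero_mul, add_zero]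
  have hafter {t : ℝ} (ht : T ≤ t) : (fun s => H (min t T) s + (γ (max t T) - γ T) * l s) =
      fun s => H T s + (γ t - γ T) * l s := by
    rw [min_eq_right ht, max_eq_left ht]
  refine ⟨fun t s => H (min t T) s + (γ (max t T) - γ T) * l s, ?_, (hbefore hT).trans hH.map_zero,
    fun t ht => ?_, fun t ht => ?_⟩
  · have hHmin : Continuous fun p : ℝ × ℝ => H (min p.1 T) p.2 :=
      hH.continuous.comp (by fun_prop : Continuous fun p : ℝ × ℝ => (min p.1 T, p.2))
    exact hHmin.add (by fun_prop)
  · rcases le_total t T with h | h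
    · simpa only [hbefore h] using hH.omegaContour t ⟨ht.1, h⟩
    · simpa only [hafter h] using hdeform _ (hclose t ⟨h, ht.2⟩)
  · rcases le_total t T with h | h
    · exact (congrFun (hbefore h) 1).trans (hH.map_one t ⟨ht.1, h⟩)
    · rw [congrFun (hafter h) 1, hl₁, hH.map_one T hTmem]
      ring

lemma eventually_dist_lt (hH : IsContourHomotopy Ω γ T H) (t₀ : ℝ) {η : ℝ} (hη : 0 < η) :
    ∀ᶠ t in 𝓝 t₀, ∀ s ∈ Icc (0 : ℝ) 1, dist (H t s) (H t₀ s) < η := by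
  refine isCompact_Icc.eventually_forall_of_forall_eventually fun s _ => ?_
  have hdist : Continuous fun p : ℝ × ℝ => dist (H p.1 p.2) (H t₀ p.2) :=
    hH.continuous.dist (hH.continuous.comp (by fun_prop : Continuous fun p : ℝ × ℝ => (t₀, p.2)))
  exact hdist.continuousAt.eventually (gt_mem_nhds (by simpa using hη))

end IsContourHomotopy

lemma exists_isContourHomotopy (hne : Ω.Nonempty) (hcl : IsClosed Ω)
    (hadd : ∀ ω₁ ∈ Ω, ∀ ω₂ ∈ Ω, ω₁ + ω₂ ∈ Ω) {γ : ℝ → ℂ} (hγ : UniformContinuous γ) {δ : ℝ}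
    (hδ : 0 < δ) (hfar : ∀ t, 2 * δ < infDist (γ t) Ω)
    (hseg : ∀ s ∈ Ioc (0 : ℝ) 1, (s : ℂ) * γ 0 ∉ Ω) (T : ℝ) :
    ∃ H, IsContourHomotopy Ω γ T H := by
  obtain ⟨τ, hτ, hclose⟩ := Metric.uniformContinuous_iff_le.1 hγ δ hδ
  have hstep (k : ℕ) : ∃ H, IsContourHomotopy Ω γ (k * τ) H := by
    induction k with
    | zero =>
      refine ⟨fun _ s => s * γ 0, by fun_prop, rfl, fun _ _ => omegaContour_segment hseg, ?_⟩
      intro t ht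
      rw [Nat.cast_zero, zero_mul, Icc_self, mem_singleton_iff] at ht
      simp [ht]
    | succ k ih =>
      obtain ⟨H, hH⟩ := ih
      refine hH.exists_extension (by positivity) hne hcl hadd hγ.continuous hδ.le (hfar _)
        fun t ht => ?_
      rw [← dist_eq_norm]
      refine hclose ?_
      rw [Real.dist_eq, abs_of_nonneg (sub_nonneg.2 ht.1)]
      linarith [ht.2, Nat.cast_succ (R := ℝ) k ▸ add_one_mul (k : ℝ) τ]
  obtain ⟨k, hk⟩ := exists_nat_ge (T / τ)
  obtain ⟨H, hH⟩ := hstep k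
  have hT : Icc 0 T ⊆ Icc 0 (k * τ) := Icc_subset_Icc_right ((div_le_iff₀ hτ).1 hk)
  exact ⟨H, hH.continuous, hH.map_zero, fun t ht => hH.omegaContour t (hT ht),
    fun t ht => hH.map_one t (hT ht)⟩

lemma exists_isContourHomotopy_of_continuousOn (hne : Ω.Nonempty) (hcl : IsClosed Ω)
    (hadd : ∀ ω₁ ∈ Ω, ∀ ω₂ ∈ Ω, ω₁ + ω₂ ∈ Ω) {γ : ℝ → ℂ} (hγ : ContinuousOn γ (Icc 0 1))
    (hav : ∀ t ∈ Icc (0 : ℝ) 1, γ t ∉ Ω) (hseg : ∀ s ∈ Ioc (0 : ℝ) 1, (s : ℂ) * γ 0 ∉ Ω) :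
    ∃ H, IsContourHomotopy Ω γ 1 H := by
  let γ' : ℝ → ℂ := IccExtend zero_le_one ((Icc (0 : ℝ) 1).domRestrict γ)
  have hγ' : EqOn γ' γ (Icc 0 1) := fun t ht => IccExtend_of_mem _ _ ht
  have hγ'₀ : γ' 0 = γ 0 := hγ' (left_mem_Icc.2 zero_le_one)
  have huc : UniformContinuous γ' := (CompactSpace.uniformContinuous_of_continuous
    (continuousOn_iff_continuous_domRestrict.1 hγ)).comp (LipschitzWith.projIcc _).uniformContinuous
  obtain ⟨t₁, ht₁, hmin⟩ := isCompact_Icc.exists_isMinOn (nonempty_Icc.2 zero_le_one)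
    ((continuous_infDist_pt Ω).comp_continuousOn hγ)
  have hpos : 0 < infDist (γ t₁) Ω := (hcl.notMem_iff_infDist_pos hne).1 (hav t₁ ht₁)
  have hfar (t) : 2 * (infDist (γ t₁) Ω / 3) < infDist (γ' t) Ω :=
    (by linarith : _ < infDist (γ t₁) Ω).trans_le (hmin (projIcc 0 1 zero_le_one t).2)
  obtain ⟨H, hH⟩ := exists_isContourHomotopy hne hcl hadd huc (by linarith) hfar
    (by rwa [hγ'₀]) 1
  exact ⟨H, hH.continuous, hγ'₀ ▸ hH.map_zero, hγ'₀ ▸ hH.omegaContour,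
    fun t ht => (hH.map_one t ht).trans (hγ' ht)⟩

end ContourHomotopies

section PiecewiseC1

variable {γ δ : ℝ → ℂ} {a b c : ℝ}

namespace PiecewiseC1On

lemma of_contDiff (hγ : ContDiff ℝ 1 γ) (hab : a ≤ b) : PiecewiseC1On γ a b :=
  ⟨hγ.continuous.continuousOn, 1, fun i => if i = 0 then a else b, by simp, by simp, by simpa,
    fun _ _ => hγ.contDiffOn⟩

lemma congr (hγ : PiecewiseC1On γ a b) (h : EqOn δ γ (Icc a b)) : PiecewiseC1On δ a b := by
  obtain ⟨hcont, n, u, hu₀, hun, hmono, hsmooth⟩ := hγ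
  refine ⟨hcont.congr h, n, u, hu₀, hun, hmono, fun i hi => (hsmooth i hi).congr (h.mono ?_)⟩
  have humono : MonotoneOn u (Icc 0 n) :=
    monotoneOn_of_le_add_one ordConnected_Icc fun k _ _ hk => hmono k (mem_Icc.1 hk).2
  rw [← hu₀, ← hun]
  exact Icc_subset_Icc (humono ⟨le_rfl, n.zero_le⟩ ⟨i.zero_le, hi.le⟩ i.zero_le)
    (humono ⟨(i + 1).zero_le, hi⟩ ⟨n.zero_le, le_rfl⟩ hi)

lemma union (hab : PiecewiseC1On γ a b) (hbc : PiecewiseC1On γ b c) (h : a ≤ b) (h' : b ≤ c) :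
    PiecewiseC1On γ a c := by
  obtain ⟨hcont, n, u, hu₀, hun, humono, husmooth⟩ := hab
  obtain ⟨hcont', m, v, hv₀, hvm, hvmono, hvsmooth⟩ := hbc
  have hadd (i : ℕ) : (if n + i ≤ n then u (n + i) else v (n + i - n)) = v i := by
    rcases i.eq_zero_or_pos with rfl | hi
    · simp [hun, hv₀]
    · simp [hi.ne']
  have hsplit {P : ℝ → ℝ → Prop} (hu : ∀ i < n, P (u i) (u (i + 1)))
      (hv : ∀ i < m, P (v i) (v (i + 1))) (i) (hi : i < n + m) :
      P (if i ≤ n then u i else v (i - n)) (if i + 1 ≤ n then u (i + 1) else v (i + 1 - n)) := by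
    rcases lt_or_ge i n with hin | hin
    · rw [if_pos hin.le, if_pos (Nat.succ_le_of_lt hin)]
      exact hu i hin
    · obtain ⟨j, rfl⟩ := Nat.exists_eq_add_of_le hin
      rw [hadd, add_assoc, hadd]
      exact hv j (by omega)
  refine ⟨?_, n + m, fun i => if i ≤ n then u i else v (i - n), by simpa, ?_,
    hsplit humono hvmono, hsplit (P := fun x y => ContDiffOn ℝ 1 γ (Icc x y)) husmooth hvsmooth⟩
  · rw [← Icc_union_Icc_eq_Icc h h']
    exact hcont.union_of_isClosed hcont' isClosed_Icc isClosed_Icc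
  · simpa only [hadd] using hvm

lemma comp_affine {k d : ℝ} (hk : 0 < k) (hγ : PiecewiseC1On γ (k * a + d) (k * b + d)) :
    PiecewiseC1On (fun t => γ (k * t + d)) a b := by
  obtain ⟨hcont, n, u, hu₀, hun, hmono, hsmooth⟩ := hγ
  have hmaps {x y : ℝ} : MapsTo (fun t => k * t + d) (Icc x y) (Icc (k * x + d) (k * y + d)) :=
    ((monotone_id.const_mul hk.le).add_const d).mapsTo_Icc
  have hinv (x : ℝ) : k * ((x - d) / k) + d = x := by field_simp; ring
  refine ⟨hcont.comp (by fun_prop) hmaps, n, fun i => (u i - d) / k, by simp [hu₀, hk.ne'],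
    by simp [hun, hk.ne'], fun i hi => ?_, fun i hi => ?_⟩
  · exact div_le_div_of_nonneg_right (sub_le_sub_right (hmono i hi) d) hk.le
  refine (hsmooth i hi).comp (by fun_prop) ?_
  simpa only [hinv] using hmaps (x := (u i - d) / k) (y := (u (i + 1) - d) / k)

lemma concat (hγ : PiecewiseC1On γ a b) (hδ : PiecewiseC1On δ b c) (hab : a ≤ b) (hbc : b ≤ c)
    (h : γ b = δ b) : PiecewiseC1On (fun t => if t ≤ b then γ t else δ t) a c := by
  refine (hγ.congr fun t ht => if_pos ht.2).union (hδ.congr fun t ht => ?_) hab hbc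
  rcases ht.1.eq_or_lt with rfl | hlt
  · simpa
  · simp [hlt.not_ge]

end PiecewiseC1On

/-- The germ at `p` of `f` admits analytic continuation along all paths of `ℂ ∖ Ω` starting
at `p`. -/
def ContinuableFrom (Ω : Set ℂ) (f : ℂ → ℂ) (p : ℂ) : Prop :=
  ∀ γ : ℝ → ℂ, PiecewiseC1On γ 0 1 → γ 0 = p → (∀ t ∈ Icc (0 : ℝ) 1, γ t ∉ Ω) →
    ContinuableAlong f γ 0 1

lemma omegaCont_iff {Ω : Set ℂ} {f : ℂ → ℂ} :
    OmegaCont Ω f ↔ ∃ R > 0, AnalyticOnNhd ℂ f (ball 0 R) ∧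
      (∀ ζ ∈ ball (0 : ℂ) R, ζ ≠ 0 → ζ ∉ Ω) ∧
      ∀ p ∈ ball (0 : ℂ) R, p ≠ 0 → ContinuableFrom Ω f p := by
  refine exists_congr fun R => and_congr_right fun _ => and_congr_right fun _ =>
    and_congr_right fun _ => ⟨?_, ?_⟩
  · rintro h p hp hp₀ γ hγ rfl hav
    exact h γ hγ hp hp₀ hav
  · exact fun h γ hγ hp hp₀ hav => h _ hp hp₀ γ hγ rfl hav

namespace ContinuableFrom

variable {Ω : Set ℂ} {f : ℂ → ℂ}

lemma exists_isContinuationOn (hf : ContinuableFrom Ω f (γ a)) (hab : a < b)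
    (hγ : PiecewiseC1On γ a b) (hav : ∀ t ∈ Icc a b, γ t ∉ Ω) :
    ∃ F, IsContinuationOn F γ (Icc a b) ∧ F a =ᶠ[𝓝 (γ a)] f := by
  have hk : 0 < b - a := sub_pos.2 hab
  have hmaps : MapsTo (fun t => (b - a) * t + a) (Icc 0 1) (Icc a b) := fun t ht =>
    ⟨by nlinarith [ht.1], by nlinarith [ht.2]⟩
  have hmaps' : MapsTo (fun t => (t - a) / (b - a)) (Icc a b) (Icc 0 1) := fun t ht =>
    ⟨div_nonneg (by linarith [ht.1]) hk.le, (div_le_one hk).2 (by linarith [ht.2])⟩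
  have hγ' : PiecewiseC1On (fun t => γ ((b - a) * t + a)) 0 1 := .comp_affine hk (by simpa)
  obtain ⟨F, hF, hF₀⟩ := (continuableAlong_iff hγ'.1).1
    (hf _ hγ' (by simp) fun t ht => hav _ (hmaps ht))
  refine ⟨_, (hF.comp (by fun_prop) hmaps').congr_path fun t _ => ?_, by simpa using hF₀⟩
  simp only [Function.comp_apply]
  congr 1
  field_simp
  ring

lemma continuation (hf : ContinuableFrom Ω f (γ a)) (hab : a ≤ b) (hγ : PiecewiseC1On γ a b)
    (hav : ∀ t ∈ Icc a b, γ t ∉ Ω) {F : ℝ → ℂ → ℂ} (hF : IsContinuationOn F γ (Icc a b))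
    (hFa : F a =ᶠ[𝓝 (γ a)] f) : ContinuableFrom Ω (F b) (γ b) := by
  intro δ hδ hδ₀ hδav
  have hδ' : PiecewiseC1On (fun t => δ (1 * t + -b)) b (b + 1) := .comp_affine one_pos (by simpa)
  let η : ℝ → ℂ := fun t => if t ≤ b then γ t else δ (1 * t + -b)
  have hηγ : EqOn η γ (Icc a b) := fun t ht => if_pos ht.2
  have hηδ (t) (ht : 0 ≤ t) : η (t + b) = δ t := by
    rcases ht.eq_or_lt with rfl | hlt
    · simp [η, hδ₀]
    · simp [η, hlt.not_ge]
  have hη : PiecewiseC1On η a (b + 1) := hγ.concat hδ' hab (by linarith) (by simp [hδ₀])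
  have hηav : ∀ t ∈ Icc a (b + 1), η t ∉ Ω := fun t ht => by
    rcases le_total t b with htb | htb
    · exact hηγ ⟨ht.1, htb⟩ ▸ hav t ⟨ht.1, htb⟩
    · rw [← sub_add_cancel t b, hηδ _ (sub_nonneg.2 htb)]
      exact hδav _ ⟨sub_nonneg.2 htb, by linarith [ht.2]⟩
  have hηa : η a = γ a := hηγ (left_mem_Icc.2 hab)
  obtain ⟨G, hG, hGa⟩ := exists_isContinuationOn (hηa ▸ hf) (by linarith) hη hηav
  have hGF : G b =ᶠ[𝓝 (γ b)] F b := by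
    refine ((hG.mono (Icc_subset_Icc_right (by linarith))).congr_path
      hηγ.symm).eventuallyEq_of_isPreconnected hF hγ.1 isPreconnected_Icc (left_mem_Icc.2 hab)
      (right_mem_Icc.2 hab) ?_
    exact (hηa ▸ hGa).trans hFa.symm
  refine (continuableAlong_iff hδ.1).2 ⟨fun t => G (t + b), ?_, by simpa [hδ₀] using hGF⟩
  exact (hG.comp (σ := fun t => t + b) (by fun_prop) fun t ht =>
    ⟨by linarith [ht.1], by linarith [ht.2]⟩).congr_path fun t ht => (hηδ t ht.1).symm

end ContinuableFrom

end PiecewiseC1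

section Convolution

variable {Ω : Set ℂ} {f g : ℂ → ℂ} {z : ℂ} {R : ℝ}

lemma isUniformContinuationOn_segment (hf : AnalyticOnNhd ℂ f (ball 0 R)) (hz : ‖z‖ < R) :
    IsUniformContinuationOn (fun _ => f) (fun s : ℝ => (s : ℂ) * z) (R - ‖z‖) (Icc 0 1) where
  pos := sub_pos.2 hz
  analyticOnNhd s hs := hf.mono <| ball_subset_ball' <| by
    rw [dist_zero_right]
    linarith [norm_ofReal_mul_le (z := z) hs]
  eventually_eqOn _ _ := .of_forall fun _ _ _ => rfl

lemma analyticOnNhd_conv (hf : AnalyticOnNhd ℂ f (ball 0 R)) (hg : AnalyticOnNhd ℂ g (ball 0 R))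
    (hR : 0 < R) : AnalyticOnNhd ℂ (conv f g) (ball 0 R) := by
  have hR' : ‖(0 : ℂ)‖ < R := by simpa
  have hconv := (isUniformContinuationOn_segment hf hR').analyticOnNhd_convAlong
    (isUniformContinuationOn_segment hg hR')
    (SymmContour.ofReal_mul_const 0)
  simpa [conv_eq_convAlong f g 0] using hconv

lemma OmegaContour.exists_isContinuationOn {H : ℝ → ℂ} (hH : OmegaContour Ω z H)
    (hf : AnalyticOnNhd ℂ f (ball 0 R))
    (hcont : ∀ p ∈ ball (0 : ℂ) R, p ≠ 0 → ContinuableFrom Ω f p) (hz : ‖z‖ < R) (hz₀ : z ≠ 0) :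
    ∃ F, IsContinuationOn F H (Icc 0 1) ∧ F 0 =ᶠ[𝓝 0] f := by
  obtain ⟨e, he, hstart⟩ := nhds_basis_closedBall.eventually_iff.1
    (hH.eventually_eq.and (Iio_mem_nhds one_pos))
  have he₁ : e < 1 := (hstart (by simp [abs_of_pos he] : e ∈ closedBall 0 e)).2
  have hseg (s) (hs : s ∈ Icc 0 e) : H s = s * z :=
    (hstart (by simpa [abs_of_nonneg hs.1] using hs.2)).1
  have hmem (s) (hs : s ∈ Icc 0 e) : H s ∈ ball 0 R := by
    rw [hseg s hs, mem_ball_zero_iff]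
    exact (norm_ofReal_mul_le ⟨hs.1, hs.2.trans he₁.le⟩).trans_lt hz
  have he_mem : e ∈ Icc 0 e := right_mem_Icc.2 he.le
  have hHe : H e ≠ 0 := by
    rw [hseg e he_mem]
    exact mul_ne_zero (Complex.ofReal_ne_zero.2 he.ne') hz₀
  obtain ⟨G, hG, hGe⟩ := (hcont _ (hmem e he_mem) hHe).exists_isContinuationOn he₁
    (.of_contDiff hH.contDiff he₁.le) fun s hs => hH.notMem s ⟨he.trans_le hs.1, hs.2⟩
  exact ⟨_, (IsContinuationOn.const fun s hs => hf _ (hmem s hs)).concat hG he.le he₁.le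
    hH.contDiff.continuous.continuousOn hGe, by simp [he.le]⟩

lemma OmegaContour.exists_isUniformContinuationOn {H : ℝ → ℂ} (hH : OmegaContour Ω z H)
    (hf : AnalyticOnNhd ℂ f (ball 0 R))
    (hcont : ∀ p ∈ ball (0 : ℂ) R, p ≠ 0 → ContinuableFrom Ω f p) (hz : ‖z‖ < R) (hz₀ : z ≠ 0) :
    ∃ ρ F, IsUniformContinuationOn F H ρ (Icc 0 1) ∧ F 0 =ᶠ[𝓝 0] f := by
  obtain ⟨F, hF, hF₀⟩ := hH.exists_isContinuationOn hf hcont hz hz₀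
  obtain ⟨ρ, F', hF', hF'F⟩ :=
    hF.exists_isUniformContinuationOn hH.contDiff.continuous.continuousOn isCompact_Icc
  have h₀ := hF'F 0 (left_mem_Icc.2 zero_le_one)
  rw [hH.toSymmContour.map_zero] at h₀
  exact ⟨ρ, F', hF', h₀.trans hF₀⟩

namespace IsContourHomotopy

variable {γ : ℝ → ℂ} {H : ℝ → ℝ → ℂ} {F G : ℝ → ℝ → ℂ → ℂ} {ρ : ℝ → ℝ}

lemma isContinuationOn_convAlong (hH : IsContourHomotopy Ω γ 1 H)
    (hF : ∀ t ∈ Icc (0 : ℝ) 1, IsUniformContinuationOn (F t) (H t) (ρ t) (Icc 0 1))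
    (hG : ∀ t ∈ Icc (0 : ℝ) 1, IsUniformContinuationOn (G t) (H t) (ρ t) (Icc 0 1))
    (hF₀ : ∀ t ∈ Icc (0 : ℝ) 1, F t 0 =ᶠ[𝓝 0] f) (hG₀ : ∀ t ∈ Icc (0 : ℝ) 1, G t 0 =ᶠ[𝓝 0] g) :
    IsContinuationOn (fun t ζ => convAlong (F t) (G t) (moveEnd (H t) ζ)) γ (Icc 0 1) where
  analyticAt t ht := by
    rw [← hH.map_one t ht]
    exact (hF t ht).analyticOnNhd_convAlong (hG t ht) (hH.omegaContour t ht).toSymmContour _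
      (mem_ball_self (hF t ht).pos)
  eventually_eq t ht := by
    filter_upwards [self_mem_nhdsWithin, mem_nhdsWithin_of_mem_nhds
      (hH.eventually_dist_lt t (by linarith [(hF t ht).pos] : 0 < ρ t / 4))] with u hu hclose
    rw [← hH.map_one u hu]
    exact (hF t ht).convAlong_moveEnd_eventuallyEq (hG t ht) (hF u hu) (hG u hu)
      (hH.omegaContour t ht).toSymmContour (hH.omegaContour u hu).toSymmContour
      ((hF₀ u hu).trans (hF₀ t ht).symm) ((hG₀ u hu).trans (hG₀ t ht).symm) hclose

end IsContourHomotopy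

lemma convAlong_segment_eventuallyEq_conv {F G : ℝ → ℂ → ℂ} {ρ : ℝ}
    (hf : AnalyticOnNhd ℂ f (ball 0 R)) (hg : AnalyticOnNhd ℂ g (ball 0 R)) (hz : ‖z‖ < R)
    (hF : IsUniformContinuationOn F (fun s => s * z) ρ (Icc 0 1))
    (hG : IsUniformContinuationOn G (fun s => s * z) ρ (Icc 0 1))
    (hF₀ : F 0 =ᶠ[𝓝 0] f) (hG₀ : G 0 =ᶠ[𝓝 0] g) :
    (fun ζ => convAlong F G (moveEnd (fun s => s * z) ζ)) =ᶠ[𝓝 z] conv f g := by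
  have hseg : SymmContour fun s => s * z := SymmContour.ofReal_mul_const z
  have h := (isUniformContinuationOn_segment hf hz).convAlong_moveEnd_eventuallyEq
    (isUniformContinuationOn_segment hg hz) hF hG hseg hseg hF₀ hG₀ fun s _ => by
      rw [dist_self]
      linarith
  rw [conv_eq_convAlong f g z]
  simpa using h

lemma continuableFrom_conv (hne : Ω.Nonempty) (hcl : IsClosed Ω)
    (hadd : ∀ ω₁ ∈ Ω, ∀ ω₂ ∈ Ω, ω₁ + ω₂ ∈ Ω) (hΩ : ∀ ζ ∈ ball (0 : ℂ) R, ζ ≠ 0 → ζ ∉ Ω)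
    (hf : AnalyticOnNhd ℂ f (ball 0 R)) (hg : AnalyticOnNhd ℂ g (ball 0 R))
    (hcf : ∀ p ∈ ball (0 : ℂ) R, p ≠ 0 → ContinuableFrom Ω f p)
    (hcg : ∀ p ∈ ball (0 : ℂ) R, p ≠ 0 → ContinuableFrom Ω g p) (hz : ‖z‖ < R) (hz₀ : z ≠ 0) :
    ContinuableFrom Ω (conv f g) z := by
  rintro γ hγ rfl hav
  obtain ⟨H, hH⟩ := exists_isContourHomotopy_of_continuousOn hne hcl hadd hγ.1 hav fun s hs =>
    hΩ _ (mem_ball_zero_iff.2 ((norm_ofReal_mul_le ⟨hs.1.le, hs.2⟩).trans_lt hz))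
      (mul_ne_zero (Complex.ofReal_ne_zero.2 hs.1.ne') hz₀)
  have h₀ : (0 : ℝ) ∈ Icc (0 : ℝ) 1 := left_mem_Icc.2 zero_le_one
  have hfamilies : ∀ t ∈ Icc (0 : ℝ) 1, ∃ ρ F G, IsUniformContinuationOn F (H t) ρ (Icc 0 1) ∧
      IsUniformContinuationOn G (H t) ρ (Icc 0 1) ∧ F 0 =ᶠ[𝓝 0] f ∧ G 0 =ᶠ[𝓝 0] g := by
    intro t ht
    obtain ⟨ρ, F, hF, hF₀⟩ :=
      (hH.omegaContour t ht).exists_isUniformContinuationOn hf hcf hz hz₀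
    obtain ⟨ρ', G, hG, hG₀⟩ :=
      (hH.omegaContour t ht).exists_isUniformContinuationOn hg hcg hz hz₀
    have hpos : 0 < min ρ ρ' := lt_min hF.pos hG.pos
    exact ⟨min ρ ρ', F, G, hF.mono hpos (min_le_left _ _), hG.mono hpos (min_le_right _ _),
      hF₀, hG₀⟩
  choose! ρ F G hF hG hF₀ hG₀ using hfamilies
  refine (continuableAlong_iff hγ.1).2 ⟨_, hH.isContinuationOn_convAlong hF hG hF₀ hG₀, ?_⟩
  have hF_start := hF 0 h₀
  have hG_start := hG 0 h₀
  rw [hH.map_zero] at hF_start hG_start ⊢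
  exact convAlong_segment_eventuallyEq_conv hf hg hz hF_start hG_start (hF₀ 0 h₀) (hG₀ 0 h₀)

lemma OmegaCont.conv (hne : Ω.Nonempty) (hcl : IsClosed Ω)
    (hadd : ∀ ω₁ ∈ Ω, ∀ ω₂ ∈ Ω, ω₁ + ω₂ ∈ Ω) (hf : OmegaCont Ω f) (hg : OmegaCont Ω g) :
    OmegaCont Ω (conv f g) := by
  obtain ⟨R₁, hR₁, hf, hΩ, hcf⟩ := omegaCont_iff.1 hf
  obtain ⟨R₂, hR₂, hg, -, hcg⟩ := omegaCont_iff.1 hg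
  have h₁ : ball (0 : ℂ) (min R₁ R₂) ⊆ ball 0 R₁ := ball_subset_ball (min_le_left _ _)
  have h₂ : ball (0 : ℂ) (min R₁ R₂) ⊆ ball 0 R₂ := ball_subset_ball (min_le_right _ _)
  have hΩ' : ∀ ζ ∈ ball (0 : ℂ) (min R₁ R₂), ζ ≠ 0 → ζ ∉ Ω := fun ζ hζ => hΩ ζ (h₁ hζ)
  refine omegaCont_iff.2 ⟨min R₁ R₂, lt_min hR₁ hR₂,
    analyticOnNhd_conv (hf.mono h₁) (hg.mono h₂) (lt_min hR₁ hR₂), hΩ', fun p hp hp₀ => ?_⟩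
  exact continuableFrom_conv hne hcl hadd hΩ' (hf.mono h₁) (hg.mono h₂)
    (fun p hp => hcf p (h₁ hp)) (fun p hp => hcg p (h₂ hp)) (mem_ball_zero_iff.1 hp) hp₀

end Convolution

section ContinuationOfPrimitives

variable {E : Type*} [NormedAddCommGroup E] [NormedSpace ℂ E] [CompleteSpace E]
  {F : ℝ → ℂ → E} {γ : ℝ → ℂ} {a b : ℝ}

lemma IsContinuationOn.integral_deriv_smul_deriv_eq_sub (hF : IsContinuationOn F γ (Icc a b))
    (hab : a ≤ b) (hγ : ContDiff ℝ 1 γ) :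
    ∫ t in a..b, deriv γ t • deriv (F t) (γ t) = F b (γ b) - F a (γ a) := by
  have hγcont : ContinuousOn γ (Icc a b) := hγ.continuous.continuousOn
  refine integral_eq_sub_of_hasDerivAt_of_le hab (hF.continuousOn_eval hγcont) (fun t ht => ?_)
    (((hγ.continuous_deriv le_rfl).continuousOn.smul
      (hF.deriv.continuousOn_eval hγcont)).intervalIntegrable_of_Icc hab)
  have htI : t ∈ Icc a b := Ioo_subset_Icc_self ht
  have hnear := hF.eventually_eq t htI
  rw [nhdsWithin_eq_nhds.2 (Icc_mem_nhds ht.1 ht.2)] at hnear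
  exact ((hF.analyticAt t htI).differentiableAt.hasDerivAt.scomp t
    (hγ.differentiable one_ne_zero t).hasDerivAt).congr_of_eventuallyEq
      (hnear.mono fun _ hs => hs.eq_of_nhds)

/-- `(z - w) h(z)` is a primitive of `φ` near `p`, where the germ of `h` can be continued along all
paths of `ℂ ∖ Ω`. The convolution of two simple poles is of this kind. -/
structure IsScaledPrimitive (Ω : Set ℂ) (w : ℂ) (φ h : ℂ → ℂ) (p : ℂ) : Prop where
  continuableFrom : ContinuableFrom Ω h p
  deriv_eq : deriv (fun z => (z - w) * h z) =ᶠ[𝓝 p] φ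

lemma IsScaledPrimitive.exists_continuation {Ω : Set ℂ} {w : ℂ} {φ h : ℂ → ℂ}
    (hh : IsScaledPrimitive Ω w φ h (γ a)) (hab : a < b) (hγ : ContDiff ℝ 1 γ)
    (hav : ∀ t ∈ Icc a b, γ t ∉ Ω) (hφ : ∀ z ∉ Ω, AnalyticAt ℂ φ z) :
    ∃ h', IsScaledPrimitive Ω w φ h' (γ b) ∧
      ∫ t in a..b, deriv γ t • φ (γ t) = (γ b - w) * h' (γ b) - (γ a - w) * h (γ a) := by
  have hpiece : PiecewiseC1On γ a b := .of_contDiff hγ hab.le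
  have hb : b ∈ Icc a b := right_mem_Icc.2 hab.le
  obtain ⟨F, hF, hFa⟩ := hh.continuableFrom.exists_isContinuationOn hab hpiece hav
  have hprod := hF.mul_left fun t _ => (analyticAt_id (z := γ t)).sub (analyticAt_const (v := w))
  have hderiv : ∀ t ∈ Icc a b, deriv (fun z => (z - w) * F t z) =ᶠ[𝓝 (γ t)] φ := fun t ht =>
    hprod.deriv.eventuallyEq_of_isPreconnected (.const fun s hs => hφ _ (hav s hs)) hpiece.1
      isPreconnected_Icc (left_mem_Icc.2 hab.le) ht
      ((EventuallyEq.rfl.mul hFa).deriv.trans hh.deriv_eq)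
  refine ⟨F b, ⟨hh.continuableFrom.continuation hab.le hpiece hav hF hFa, hderiv b hb⟩, ?_⟩
  rw [← hFa.eq_of_nhds]
  refine .trans (integral_congr fun t ht => ?_) (hprod.integral_deriv_smul_deriv_eq_sub hab.le hγ)
  rw [uIcc_of_le hab.le] at ht
  exact congrArg _ (hderiv t ht).eq_of_nhds.symm

end ContinuationOfPrimitives

section PolarGerms

variable {f g : ℂ → ℂ} {z w w₁ w₂ : ℂ} {R : ℝ}

lemma conv_comm (f g : ℂ → ℂ) : conv f g = conv g f := by
  funext z
  have h := integral_comp_sub_left (fun t : ℝ => f (t * z) * g ((1 - t) * z)) (a := 0) (b := 1) 1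
  simp only [sub_self, sub_zero, Complex.ofReal_sub, Complex.ofReal_one, sub_sub_cancel] at h
  simp only [conv, ← h]
  simp only [mul_comm]

lemma hasDerivAt_conv_one (hf : DifferentiableOn ℂ f (ball 0 R)) (hz : z ∈ ball 0 R) :
    HasDerivAt (conv f 1) (f z) z := by
  obtain ⟨P, hP⟩ := hf.isExactOn_ball
  refine (((hP z hz).sub_const (P 0))).congr_of_eventuallyEq ?_
  filter_upwards [isOpen_ball.mem_nhds hz] with ζ hζ
  have hmem {t : ℝ} (ht : t ∈ Icc (0 : ℝ) 1) : 0 + t • ζ ∈ ball 0 R := by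
    rw [zero_add, Complex.real_smul, mem_ball_zero_iff]
    exact (norm_ofReal_mul_le ht).trans_lt (mem_ball_zero_iff.1 hζ)
  have h := integral_unitInterval_deriv_eq_sub
    (hf.continuousOn.comp (by fun_prop) fun t ht => hmem ht) fun t ht => hP _ (hmem ht)
  simpa [conv] using h

lemma ofReal_mul_sub_ne_zero (hz : ‖z‖ < ‖w‖) {t : ℝ} (ht : t ∈ Icc (0 : ℝ) 1) :
    t * z - w ≠ 0 := fun h =>
  (norm_ofReal_mul_le ht).not_gt (by rwa [sub_eq_zero.1 h])

lemma continuousOn_inv_sub (hz : ‖z‖ < ‖w‖) :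
    ContinuousOn (fun t : ℝ => (t * z - w)⁻¹) (Icc 0 1) :=
  .inv₀ (by fun_prop) fun _ => ofReal_mul_sub_ne_zero hz

lemma sub_mul_conv_inv_inv (h₁ : ‖z‖ < ‖w₁‖) (h₂ : ‖z‖ < ‖w₂‖) :
    (z - (w₁ + w₂)) * conv (fun ζ => (ζ - w₁)⁻¹) (fun ζ => (ζ - w₂)⁻¹) z =
      conv (fun ζ => (ζ - w₁)⁻¹) 1 z + conv (fun ζ => (ζ - w₂)⁻¹) 1 z := by
  have hc₁ := continuousOn_inv_sub h₁
  have hc₂ : ContinuousOn (fun t : ℝ => ((1 - t) * z - w₂)⁻¹) (Icc 0 1) := by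
    simpa [Function.comp_def] using (continuousOn_inv_sub h₂).comp
      (continuous_const.sub continuous_id).continuousOn fun t => one_sub_mem_Icc
  rw [conv_comm (fun ζ => (ζ - w₂)⁻¹) 1]
  simp only [conv, Pi.one_apply, mul_one, one_mul]
  rw [← mul_add, ← integral_add (hc₁.intervalIntegrable_of_Icc zero_le_one)
    (hc₂.intervalIntegrable_of_Icc zero_le_one), mul_left_comm, ← integral_const_mul]
  congr 1
  refine integral_congr fun t ht => ?_
  rw [uIcc_of_le zero_le_one] at ht
  have hne₁ : t * z - w₁ ≠ 0 := ofReal_mul_sub_ne_zero h₁ ht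
  have hne₂ : (1 - t) * z - w₂ ≠ 0 := by
    simpa using ofReal_mul_sub_ne_zero h₂ (one_sub_mem_Icc ht)
  have hsum : z - (w₁ + w₂) = (t * z - w₁) + ((1 - t) * z - w₂) := by ring
  simp only [hsum, add_mul, mul_inv_cancel_left₀ hne₁]
  rw [mul_comm (_ - w₁)⁻¹, mul_inv_cancel_left₀ hne₂, add_comm]

lemma deriv_sub_mul_conv_inv_inv (h₁ : ‖z‖ < ‖w₁‖) (h₂ : ‖z‖ < ‖w₂‖) :
    deriv (fun ζ => (ζ - (w₁ + w₂)) * conv (fun ζ => (ζ - w₁)⁻¹) (fun ζ => (ζ - w₂)⁻¹) ζ)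
      =ᶠ[𝓝 z] fun ζ => (ζ - w₁)⁻¹ + (ζ - w₂)⁻¹ := by
  have hnear : ∀ᶠ ζ in 𝓝 z, ‖ζ‖ < ‖w₁‖ ∧ ‖ζ‖ < ‖w₂‖ :=
    (continuous_norm.continuousAt.eventually (Iio_mem_nhds h₁)).and
      (continuous_norm.continuousAt.eventually (Iio_mem_nhds h₂))
  have hderiv {w ζ : ℂ} (hζ : ‖ζ‖ < ‖w‖) :
      HasDerivAt (conv (fun ξ => (ξ - w)⁻¹) 1) (ζ - w)⁻¹ ζ := by
    refine hasDerivAt_conv_one (R := ‖w‖) (fun ξ hξ => ?_) (mem_ball_zero_iff.2 hζ)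
    have hne : ξ - w ≠ 0 := sub_ne_zero.2 fun h => (mem_ball_zero_iff.1 hξ).ne (congrArg _ h)
    exact ((differentiableAt_id.sub_const w).inv hne).differentiableWithinAt
  refine (EventuallyEq.deriv (hnear.mono fun ζ hζ =>
    sub_mul_conv_inv_inv hζ.1 hζ.2)).trans ?_
  filter_upwards [hnear] with ζ hζ
  exact ((hderiv hζ.1).add (hderiv hζ.2)).deriv

end PolarGerms

section Necessity

variable {Ω : Set ℂ}

lemma exists_ball_diff_singleton_notMem (hcl : IsClosed Ω) [DiscreteTopology Ω] (c : ℂ) :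
    ∃ r > 0, ∀ z ∈ ball c r, z ≠ c → z ∉ Ω := by
  by_cases hc : c ∈ Ω
  · obtain ⟨r, hr, h⟩ := exists_ball_inter_eq_singleton_of_mem_discrete
      (isDiscrete_iff_discreteTopology.2 ‹_›) hc
    exact ⟨r, hr, fun z hz hzc hzΩ => hzc (h.subset ⟨hz, hzΩ⟩)⟩
  · obtain ⟨r, hr, h⟩ := Metric.isOpen_iff.1 hcl.isOpen_compl c hc
    exact ⟨r, hr, fun z hz _ => h hz⟩

lemma analyticAt_inv_sub {z w : ℂ} (h : z ≠ w) : AnalyticAt ℂ (fun ζ => (ζ - w)⁻¹) z :=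
  (analyticAt_id.sub analyticAt_const).inv (sub_ne_zero.2 h)

lemma omegaCont_of_analyticAt (hcl : IsClosed Ω) [DiscreteTopology Ω] {f : ℂ → ℂ}
    (hf₀ : AnalyticAt ℂ f 0) (hf : ∀ z ∉ Ω, AnalyticAt ℂ f z) : OmegaCont Ω f := by
  obtain ⟨R, hR, hΩ⟩ := exists_ball_diff_singleton_notMem hcl 0
  refine omegaCont_iff.2 ⟨R, hR, fun z hz => ?_, hΩ, fun p _ _ γ hγ _ hav => ?_⟩
  · rcases eq_or_ne z 0 with rfl | hz₀
    · exact hf₀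
    · exact hf z (hΩ z hz hz₀)
  · exact (continuableAlong_iff hγ.1).2 ⟨_, .const fun t ht => hf _ (hav t ht), .rfl⟩

lemma exists_contDiff_path_notMem (hΩ : Ω.Countable) {a b : ℂ} (ha : a ∉ Ω) (hb : b ∉ Ω) :
    ∃ σ : ℝ → ℂ, ContDiff ℝ 1 σ ∧ σ 0 = a ∧ σ 1 = b ∧ ∀ t ∈ Icc (0 : ℝ) 1, σ t ∉ Ω := by
  rcases eq_or_ne a b with rfl | hab
  · exact ⟨fun _ => a, contDiff_const, rfl, rfl, fun _ _ => ha⟩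
  have hba : b - a ≠ 0 := sub_ne_zero.2 hab.symm
  -- The arcs `a + (t + s t (1 - t) i) (b - a)` only meet at their endpoints: `param z` is the `s`
  -- of the arc through `z`. Hence the points of `Ω` lie on countably many of them.
  let param (z : ℂ) : ℝ := ((z - a) / (b - a)).im /
    (((z - a) / (b - a)).re * (1 - ((z - a) / (b - a)).re))
  obtain ⟨s, hs⟩ : ∃ s, s ∉ param '' Ω := ((hΩ.image param).dense_compl ℝ).nonempty
  let σ (t : ℝ) : ℂ := a + (t + (s * (t * (1 - t)) : ℝ) * Complex.I) * (b - a)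
  have hσ : ContDiff ℝ 1 σ := by
    have hofReal : ContDiff ℝ 1 Complex.ofReal := Complex.ofRealCLM.contDiff
    have hheight : ContDiff ℝ 1 fun t : ℝ => s * (t * (1 - t)) := by fun_prop
    exact contDiff_const.add
      ((hofReal.add ((hofReal.comp hheight).mul contDiff_const)).mul contDiff_const)
  have hparam {t : ℝ} (h₀ : t ≠ 0) (h₁ : 1 - t ≠ 0) : param (σ t) = s := by
    have hre : ((t : ℂ) + (s * (t * (1 - t)) : ℝ) * Complex.I).re = t := by
      simp [-Complex.ofReal_mul, -Complex.ofReal_sub]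
    have him : ((t : ℂ) + (s * (t * (1 - t)) : ℝ) * Complex.I).im = s * (t * (1 - t)) := by
      simp [-Complex.ofReal_mul, -Complex.ofReal_sub]
    simp only [param, σ, add_sub_cancel_left, mul_div_cancel_right₀ _ hba, hre, him]
    field_simp
  have hσ₀ : σ 0 = a := by simp [σ]
  have hσ₁ : σ 1 = b := by simp [σ]
  refine ⟨σ, hσ, hσ₀, hσ₁, fun t _ hmem => ?_⟩
  rcases eq_or_ne t 0 with rfl | h₀
  · exact ha (hσ₀ ▸ hmem)
  rcases eq_or_ne t 1 with rfl | h₁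
  · exact hb (hσ₁ ▸ hmem)
  · exact hs ⟨σ t, hmem, hparam h₀ (sub_ne_zero.2 h₁.symm)⟩

lemma circleIntegral_sub_inv_of_notMem_closedBall {c w : ℂ} {r : ℝ} (hr : 0 ≤ r)
    (hw : w ∉ closedBall c r) : (∮ z in C(c, r), (z - w)⁻¹) = 0 :=
  (DifferentiableOn.diffContOnCl fun _ hz => (analyticAt_inv_sub (ne_of_mem_of_not_mem
    (closure_ball_subset_closedBall hz) hw)).differentiableWithinAt).circleIntegral_eq_zero hr

lemma circleIntegral_sub_inv_add_sub_inv_ne_zero {w₁ w₂ : ℂ} {r : ℝ} (hr : 0 < r)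
    (h : w₂ = w₁ ∨ w₂ ∉ closedBall w₁ r) :
    (∮ z in C(w₁, r), ((z - w₁)⁻¹ + (z - w₂)⁻¹)) ≠ 0 := by
  have h₁ := circleIntegral.integral_sub_center_inv w₁ hr.ne'
  have hint {w : ℂ} (hw : w ∉ sphere w₁ r) : CircleIntegrable (fun z => (z - w)⁻¹) w₁ r :=
    circleIntegrable_sub_inv_iff.2 (.inr (by rwa [abs_of_pos hr]))
  have hcenter : w₁ ∉ sphere w₁ r := by simp [hr.ne]
  rcases h with rfl | h
  · rw [circleIntegral.integral_add (hint hcenter) (hint hcenter), h₁, ← two_mul]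
    exact mul_ne_zero two_ne_zero Complex.two_pi_I_ne_zero
  · rw [circleIntegral.integral_add (hint hcenter) (hint (mt (sphere_subset_closedBall ·) h)), h₁,
      circleIntegral_sub_inv_of_notMem_closedBall hr.le h, add_zero]
    exact Complex.two_pi_I_ne_zero

lemma IsScaledPrimitive.circleIntegral_eq_zero {w p : ℂ} {φ h : ℂ → ℂ} (hcount : Ω.Countable)
    (hφ : ∀ z ∉ Ω, AnalyticAt ℂ φ z) (hh : IsScaledPrimitive Ω w φ h p) (hp : p ∉ Ω) (hw : w ∉ Ω)
    {c : ℂ} {r : ℝ} (hcirc : ∀ z ∈ sphere c |r|, z ∉ Ω) : (∮ z in C(c, r), φ z) = 0 := by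
  let q := circleMap c r 0
  have hq : q ∉ Ω := hcirc _ (circleMap_mem_sphere' c r 0)
  obtain ⟨A, hA, rfl, hAq, hAΩ⟩ := exists_contDiff_path_notMem hcount hp hq
  obtain ⟨B, hB, hBq, rfl, hBΩ⟩ := exists_contDiff_path_notMem hcount hq hw
  obtain ⟨h₁, hh₁, -⟩ := hh.exists_continuation one_pos hA hAΩ hφ
  rw [hAq] at hh₁
  obtain ⟨h₂, hh₂, hloop⟩ := hh₁.exists_continuation (γ := circleMap c r) Real.two_pi_pos
    (contDiff_circleMap c r) (fun θ _ => hcirc _ (circleMap_mem_sphere' c r θ)) hφ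
  have hperiod : circleMap c r (2 * Real.pi) = q := (periodic_circleMap c r).eq
  rw [hperiod] at hh₂ hloop
  -- The scaled primitives of both branches vanish at the end `B 1` of one and the same path.
  have hbranch {h' : ℂ → ℂ} (hh' : IsScaledPrimitive Ω (B 1) φ h' q) :
      (q - B 1) * h' q = -∫ t in (0 : ℝ)..1, deriv B t • φ (B t) := by
    rw [← hBq] at hh' ⊢
    obtain ⟨_, -, hint⟩ := hh'.exists_continuation one_pos hB hBΩ hφ
    rw [hint, sub_self, zero_mul, zero_sub, neg_neg]
  exact hloop.trans (sub_eq_zero.2 ((hbranch hh₂).trans (hbranch hh₁).symm))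

lemma add_mem_of_omegaCont_conv (hcl : IsClosed Ω) [DiscreteTopology Ω]
    (hconv : ∀ f g : ℂ → ℂ, OmegaCont Ω f → OmegaCont Ω g → OmegaCont Ω (conv f g)) {w₁ w₂ : ℂ}
    (hw₁ : w₁ ∈ Ω) (hw₂ : w₂ ∈ Ω) : w₁ + w₂ ∈ Ω := by
  rcases eq_or_ne w₁ 0 with rfl | hw₁₀
  · rwa [zero_add]
  rcases eq_or_ne w₂ 0 with rfl | hw₂₀
  · rwa [add_zero]
  by_contra hw
  have hinv {w : ℂ} (hw : w ∈ Ω) (z) (hz : z ∉ Ω) : AnalyticAt ℂ (fun ζ => (ζ - w)⁻¹) z :=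
    analyticAt_inv_sub (ne_of_mem_of_not_mem hw hz).symm
  obtain ⟨R, hR, -, hΩ, hcont⟩ := omegaCont_iff.1 <| hconv _ _
    (omegaCont_of_analyticAt hcl (analyticAt_inv_sub hw₁₀.symm) (hinv hw₁))
    (omegaCont_of_analyticAt hcl (analyticAt_inv_sub hw₂₀.symm) (hinv hw₂))
  obtain ⟨p, hp, hp₀, hp₁, hp₂⟩ : ∃ p ∈ ball (0 : ℂ) R, p ≠ 0 ∧ ‖p‖ < ‖w₁‖ ∧ ‖p‖ < ‖w₂‖ := by
    obtain ⟨p, hp₀, hp⟩ := NormedField.exists_norm_lt ℂ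
      (lt_min hR (lt_min (norm_pos_iff.2 hw₁₀) (norm_pos_iff.2 hw₂₀)))
    simp only [lt_min_iff] at hp
    exact ⟨p, mem_ball_zero_iff.2 hp.1, norm_pos_iff.1 hp₀, hp.2⟩
  obtain ⟨r', hr', hiso⟩ := exists_ball_diff_singleton_notMem hcl w₁
  obtain ⟨r, hr, hrr'⟩ := exists_between hr'
  have hdisc (z) (hz : z ∈ closedBall w₁ r) (hne : z ≠ w₁) : z ∉ Ω :=
    hiso z (closedBall_subset_ball hrr' hz) hne
  refine circleIntegral_sub_inv_add_sub_inv_ne_zero hr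
    (or_iff_not_imp_left.2 fun hne hmem => hdisc w₂ hmem hne hw₂) ?_
  have : Countable Ω := countable_of_Lindelof_of_discrete
  have hprim : IsScaledPrimitive Ω (w₁ + w₂) (fun z => (z - w₁)⁻¹ + (z - w₂)⁻¹) _ p :=
    ⟨hcont p hp hp₀, deriv_sub_mul_conv_inv_inv hp₁ hp₂⟩
  refine hprim.circleIntegral_eq_zero (to_countable Ω)
    (fun z hz => (hinv hw₁ z hz).add (hinv hw₂ z hz)) (hΩ p hp hp₀) hw fun z hz => ?_
  rw [abs_of_pos hr] at hz
  exact hdisc z (sphere_subset_closedBall hz) (ne_of_mem_sphere hz hr.ne')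

end Necessity

/-- **Theorem (Sauzin).** For a non-empty closed discrete `Ω ⊂ ℂ`, the space of
`Ω`-continuable germs is stable under convolution iff `Ω` is stable under addition. -/
theorem stmt0 (Ω : Set ℂ) (hne : Ω.Nonempty) (hcl : IsClosed Ω)
    (hdisc : DiscreteTopology Ω) :
    (∀ f g : ℂ → ℂ, OmegaCont Ω f → OmegaCont Ω g → OmegaCont Ω (conv f g)) ↔
      ∀ ω₁ ∈ Ω, ∀ ω₂ ∈ Ω, ω₁ + ω₂ ∈ Ω :=
  ⟨fun h _ hw₁ _ hw₂ => add_mem_of_omegaCont_conv hcl h hw₁ hw₂,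
    fun hadd _ _ hf hg => hf.conv hne hcl hadd hg⟩
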